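/- arXiv:math-ph/0303027 — 5 statements merged into one kernel-verified Lean document; each statement's English description precedes it below -/
import Mathlib

section
/- Let u ∈ ℝ, u ≠ 0, and let b ∈ ℝ, b ≠ 0. Then the improper integral lim_{R→∞} ∫_{-R}^{R} e^{-isb/u}/(s - iu) ds exists and equals 2πi · sgn(u) · e^{b} if b < 0, and equals 0 if b > 0. -/
open Real Filter MeasureTheory intervalIntegral

/-!
Put the pole at any `z` off the real axis and write the frequency as `x`. If `0 < z.im`, the
Fourier transform of the ramp `t ↦ t₊ e^{izt}` is a multiple of `(s - z)⁻²`. The ramp is continuous,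
unlike the jump `1_{t > 0} e^{izt}`, and `(s - z)⁻²` is integrable, unlike `(s - z)⁻¹`, so Fourier
inversion evaluates `∫ e^{ixs} / (s - z)² ds`. Since `x ≠ 0`, integration by parts relates this
integral to the one with `(s - z)⁻¹`, up to boundary terms that vanish as `R → ∞`. The substitution
`s ↦ -s` carries a pole in the lower half-plane to one in the upper half-plane.
-/

open Complex (I)
open scoped FourierTransform Topology

section LaplaceTransform

variable {a : ℂ}

lemma norm_ofReal_mul_cexp_mul_ofReal {t : ℝ} (ht : 0 ≤ t) :
    ‖(t : ℂ) * Complex.exp (a * t)‖ = t * rexp (a.re * t) := by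
  simp [Complex.norm_exp, abs_of_nonneg ht]

lemma tendsto_ofReal_mul_cexp_atTop_nhds_zero (ha : a.re < 0) :
    Tendsto (fun t : ℝ => (t : ℂ) * Complex.exp (a * t)) atTop (𝓝 0) := by
  rw [tendsto_zero_iff_norm_tendsto_zero]
  refine (tendsto_rpow_mul_exp_neg_mul_atTop_nhds_zero 1 (-a.re) (neg_pos.mpr ha)).congr' ?_
  filter_upwards [eventually_ge_atTop 0] with t ht
  rw [norm_ofReal_mul_cexp_mul_ofReal ht, rpow_one, neg_neg]

lemma integrableOn_ofReal_mul_cexp_Ioi (ha : a.re < 0) :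
    IntegrableOn (fun t : ℝ => (t : ℂ) * Complex.exp (a * t)) (Set.Ioi 0) := by
  have hdom : IntegrableOn (fun t : ℝ => t * rexp (a.re * t)) (Set.Ioi 0) := by
    simpa using integrableOn_rpow_mul_exp_neg_mul_rpow (s := 1) (p := 1) (b := -a.re)
      (by norm_num) one_pos (neg_pos.mpr ha)
  refine hdom.mono' (by fun_prop) ?_
  filter_upwards [ae_restrict_mem measurableSet_Ioi] with t ht
  exact (norm_ofReal_mul_cexp_mul_ofReal (le_of_lt ht)).le

lemma hasDerivAt_cexp_mul_ofReal (a : ℂ) (t : ℝ) :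
    HasDerivAt (fun t : ℝ => Complex.exp (a * t)) (a * Complex.exp (a * t)) t := by
  simpa [mul_comm] using ((hasDerivAt_id t).ofReal_comp.const_mul a).cexp

lemma integral_ofReal_mul_cexp_Ioi (ha : a.re < 0) :
    ∫ t in Set.Ioi (0 : ℝ), (t : ℂ) * Complex.exp (a * t) = (a ^ 2)⁻¹ := by
  have ha₀ : a ≠ 0 := by rintro rfl; simp at ha
  have hderiv (t : ℝ) : HasDerivAt
      (fun t : ℝ => a⁻¹ * (t * Complex.exp (a * t)) - (a ^ 2)⁻¹ * Complex.exp (a * t))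
      (t * Complex.exp (a * t)) t := by
    have hexp := hasDerivAt_cexp_mul_ofReal a t
    have hid : HasDerivAt (fun t : ℝ => (t : ℂ)) 1 t := (hasDerivAt_id t).ofReal_comp
    refine (((hid.mul hexp).const_mul a⁻¹).sub (hexp.const_mul (a ^ 2)⁻¹)).congr_deriv ?_
    field_simp
    ring
  have hexp_lim : Tendsto (fun t : ℝ => Complex.exp (a * t)) atTop (𝓝 0) := by
    simpa [Complex.tendsto_exp_nhds_zero_iff] using tendsto_id.const_mul_atTop_of_neg ha
  have hlim := ((tendsto_ofReal_mul_cexp_atTop_nhds_zero ha).const_mul a⁻¹).sub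
    (hexp_lim.const_mul (a ^ 2)⁻¹)
  rw [integral_Ioi_of_hasDerivAt_of_tendsto' (fun t _ => hderiv t)
    (integrableOn_ofReal_mul_cexp_Ioi ha) hlim]
  simp

end LaplaceTransform

section Ramp

/-- The exponentially modulated ramp `t ↦ t₊ e^{izt}`, which for `0 < z.im` is the integrable
function whose Fourier transform is a multiple of `(s - z)⁻²`. -/
noncomputable def expRamp (z : ℂ) (t : ℝ) : ℂ :=
  (max t 0 : ℝ) * Complex.exp (I * z * t)

variable {z : ℂ}

lemma continuous_expRamp (z : ℂ) : Continuous (expRamp z) := by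
  unfold expRamp
  fun_prop

lemma expRamp_eq_indicator (z : ℂ) :
    expRamp z = (Set.Ioi 0).indicator fun t : ℝ => (t : ℂ) * Complex.exp (I * z * t) := by
  ext t
  rcases le_or_gt t 0 with ht | ht
  · simp [expRamp, ht, ht.not_gt]
  · simp [expRamp, ht, ht.le]

lemma integrable_expRamp (hz : 0 < z.im) : Integrable (expRamp z) := by
  rw [expRamp_eq_indicator, integrable_indicator_iff measurableSet_Ioi]
  exact integrableOn_ofReal_mul_cexp_Ioi (by simpa using hz)

lemma fourier_expRamp (hz : 0 < z.im) (w : ℝ) :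
    𝓕 (expRamp z) w = -(((2 * π * w : ℝ) - z) ^ 2)⁻¹ := by
  have hre : (I * (z - (2 * π * w : ℝ))).re < 0 := by simpa using hz
  calc 𝓕 (expRamp z) w
      = ∫ t in Set.Ioi (0 : ℝ), (t : ℂ) * Complex.exp (I * (z - (2 * π * w : ℝ)) * t) := by
        rw [Real.fourier_real_eq_integral_exp_smul, ← MeasureTheory.integral_indicator
          measurableSet_Ioi, expRamp_eq_indicator]
        congr with t
        by_cases ht : t ∈ Set.Ioi (0 : ℝ)
        · rw [Set.indicator_of_mem ht, Set.indicator_of_mem ht, smul_eq_mul, mul_left_comm,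
            ← Complex.exp_add]
          push_cast
          ring_nf
        · rw [Set.indicator_of_notMem ht, Set.indicator_of_notMem ht, smul_zero]
    _ = ((I * (z - (2 * π * w : ℝ))) ^ 2)⁻¹ := integral_ofReal_mul_cexp_Ioi hre
    _ = -(((2 * π * w : ℝ) - z) ^ 2)⁻¹ := by
        rw [mul_pow, Complex.I_sq, neg_one_mul, inv_neg, ← neg_sub, neg_sq]

end Ramp

section SimplePole

variable {z : ℂ}

lemma ofReal_sub_ne_zero (hz : z.im ≠ 0) (s : ℝ) : (s : ℂ) - z ≠ 0 := by
  intro h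
  simpa [hz] using congrArg Complex.im h

lemma norm_cexp_I_mul_ofReal_mul_ofReal (x s : ℝ) : ‖Complex.exp (I * x * s)‖ = 1 := by
  simp [Complex.norm_exp]

lemma integrable_cexp_div_sub_sq (hz : z.im ≠ 0) (x : ℝ) :
    Integrable fun s : ℝ => Complex.exp (I * x * s) / (s - z) ^ 2 := by
  have hdom : Integrable fun s : ℝ => (z.im ^ 2)⁻¹ * (1 + ((s - z.re) / z.im) ^ 2)⁻¹ :=
    ((integrable_inv_one_add_sq.comp_div hz).comp_sub_right z.re).const_mul _
  refine hdom.mono' (Continuous.aestronglyMeasurable ?_) (.of_forall fun s => ?_)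
  · exact Continuous.div (by fun_prop) (by fun_prop)
      fun s => pow_ne_zero 2 (ofReal_sub_ne_zero hz s)
  · have hnorm : ‖(s : ℂ) - z‖ ^ 2 = (s - z.re) ^ 2 + z.im ^ 2 := by
      rw [← Complex.normSq_eq_norm_sq, Complex.normSq_apply]
      simp [sq]
    rw [norm_div, norm_pow, norm_cexp_I_mul_ofReal_mul_ofReal, hnorm, one_div, ← mul_inv]
    apply le_of_eq
    congr 1
    field_simp
    ring

lemma integral_cexp_div_sub_sq (hz : 0 < z.im) (x : ℝ) :
    ∫ s : ℝ, Complex.exp (I * x * s) / (s - z) ^ 2 = -(2 * π) * expRamp z x := by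
  have hint : Integrable (𝓕 (expRamp z)) := by
    have h := ((integrable_cexp_div_sub_sq hz.ne' 0).comp_mul_left' two_pi_pos.ne').neg
    refine h.congr (Eventually.of_forall fun w => ?_)
    simp [fourier_expRamp hz]
  have hinv := (integrable_expRamp hz).fourierInv_fourier_eq hint
    (continuous_expRamp z).continuousAt (v := x)
  have hscale := Measure.integral_comp_mul_left
    (fun s : ℝ => Complex.exp (I * x * s) / (s - z) ^ 2) (2 * π)
  rw [abs_of_pos (inv_pos.mpr two_pi_pos), Complex.real_smul] at hscale
  have hfourier : expRamp z x =
      -∫ w : ℝ, Complex.exp (I * x * (2 * π * w : ℝ)) / ((2 * π * w : ℝ) - z) ^ 2 := by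
    rw [← hinv, Real.fourierInv_eq', ← MeasureTheory.integral_neg]
    congr with w
    rw [fourier_expRamp hz, smul_eq_mul, mul_neg, ← div_eq_mul_inv]
    congr 3
    simp only [RCLike.inner_apply, ringHom_apply, Complex.ofReal_mul, Complex.ofReal_ofNat]
    ring
  rw [hfourier, hscale]
  push_cast
  field_simp

lemma tendsto_cexp_div_sub_cobounded (z : ℂ) (x : ℝ) :
    Tendsto (fun s : ℝ => Complex.exp (I * x * s) / (s - z)) (Bornology.cobounded ℝ) (𝓝 0) := by
  have hinv : Tendsto (fun s : ℝ => ((s : ℂ) - z)⁻¹) (Bornology.cobounded ℝ) (𝓝 0) :=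
    tendsto_inv₀_cobounded.comp
      ((tendsto_sub_const_cobounded z).comp (RCLike.tendsto_ofReal_cobounded_cobounded ℂ))
  rw [tendsto_zero_iff_norm_tendsto_zero] at hinv ⊢
  simpa only [norm_div, norm_cexp_I_mul_ofReal_mul_ofReal, one_div, norm_inv] using hinv

lemma integral_cexp_div_sub_eq_by_parts (hz : z.im ≠ 0) {x : ℝ} (hx : x ≠ 0) (p q : ℝ) :
    ∫ s in p..q, Complex.exp (I * x * s) / (s - z) =
      (I * x)⁻¹ * (Complex.exp (I * x * q) / (q - z) - Complex.exp (I * x * p) / (p - z) +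
        ∫ s in p..q, Complex.exp (I * x * s) / (s - z) ^ 2) := by
  have hne := ofReal_sub_ne_zero hz
  have hIx : I * (x : ℂ) ≠ 0 := mul_ne_zero Complex.I_ne_zero (Complex.ofReal_ne_zero.mpr hx)
  have hderiv (s : ℝ) : HasDerivAt (fun s : ℝ => Complex.exp (I * x * s) / (s - z))
      (I * x * (Complex.exp (I * x * s) / (s - z)) - Complex.exp (I * x * s) / (s - z) ^ 2) s := by
    have hsub : HasDerivAt (fun s : ℝ => (s : ℂ) - z) 1 s :=
      (hasDerivAt_id s).ofReal_comp.sub_const z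
    refine ((hasDerivAt_cexp_mul_ofReal (I * x) s).div hsub (hne s)).congr_deriv ?_
    have := hne s
    field_simp
  have hint₁ : IntervalIntegrable (fun s : ℝ => I * x * (Complex.exp (I * x * s) / (s - z)))
      volume p q :=
    ((Continuous.div (by fun_prop) (by fun_prop) hne).const_mul _).intervalIntegrable p q
  have hint₂ := (integrable_cexp_div_sub_sq hz x).intervalIntegrable (a := p) (b := q)
  have hftc := integral_eq_sub_of_hasDerivAt (fun s _ => hderiv s) (hint₁.sub hint₂)
  rw [intervalIntegral.integral_sub hint₁ hint₂, intervalIntegral.integral_const_mul] at hftc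
  rw [← hftc, sub_add_cancel, inv_mul_cancel_left₀ hIx]

lemma tendsto_integral_cexp_div_sub_of_im_pos (hz : 0 < z.im) {x : ℝ} (hx : x ≠ 0) :
    Tendsto (fun R : ℝ => ∫ s in (-R)..R, Complex.exp (I * x * s) / (s - z)) atTop
      (𝓝 (if 0 < x then 2 * π * I * Complex.exp (I * x * z) else 0)) := by
  have htop := (tendsto_cexp_div_sub_cobounded z x).comp
    (tendsto_id'.mpr IsOrderBornology.atTop_le_cobounded)
  have hbot := (tendsto_cexp_div_sub_cobounded z x).comp
    (tendsto_neg_atTop_atBot.mono_right IsOrderBornology.atBot_le_cobounded)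
  have hsq := intervalIntegral_tendsto_integral (integrable_cexp_div_sub_sq hz.ne' x)
    tendsto_neg_atTop_atBot tendsto_id
  have hlim := ((htop.sub hbot).add hsq).const_mul (I * x)⁻¹
  have hval : (I * x)⁻¹ * (0 - 0 + -(2 * π) * expRamp z x) =
      if 0 < x then 2 * π * I * Complex.exp (I * x * z) else 0 := by
    split_ifs with hpos
    · rw [expRamp, max_eq_left hpos.le, mul_right_comm I z]
      have hx' : (x : ℂ) ≠ 0 := Complex.ofReal_ne_zero.mpr hx
      field_simp
      simp
    · simp [expRamp, max_eq_right (not_lt.mp hpos)]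
  rw [integral_cexp_div_sub_sq hz, hval] at hlim
  simp_rw [integral_cexp_div_sub_eq_by_parts hz.ne' hx]
  exact hlim

lemma integral_cexp_div_sub_eq_neg_integral_neg (z : ℂ) (x R : ℝ) :
    ∫ s in (-R)..R, Complex.exp (I * x * s) / (s - z) =
      -∫ s in (-R)..R, Complex.exp (I * (-x : ℝ) * s) / (s - -z) := by
  have hreflect := intervalIntegral.integral_comp_neg (a := -R) (b := R)
    fun s : ℝ => Complex.exp (I * x * s) / (s - z)
  rw [neg_neg] at hreflect
  rw [← hreflect, ← intervalIntegral.integral_neg]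
  congr with s
  rw [← div_neg]
  push_cast
  ring_nf

theorem statement0_general (hz : z.im ≠ 0) {x : ℝ} (hx : x ≠ 0) :
    Tendsto (fun R : ℝ => ∫ s in (-R)..R, Complex.exp (I * x * s) / (s - z)) atTop
      (𝓝 (if 0 < x * z.im then 2 * π * I * Real.sign z.im * Complex.exp (I * x * z) else 0)) := by
  rcases hz.lt_or_gt with hneg | hpos
  · have hsign : 0 < x * z.im ↔ x < 0 := by
      rw [← neg_mul_neg, mul_pos_iff_of_pos_right (neg_pos.mpr hneg), neg_pos]
    have hlim := (tendsto_integral_cexp_div_sub_of_im_pos (z := -z) (by simpa using hneg)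
      (neg_ne_zero.mpr hx)).neg
    simp_rw [← integral_cexp_div_sub_eq_neg_integral_neg] at hlim
    simpa [Real.sign_of_neg hneg, hsign, apply_ite (Neg.neg : ℂ → ℂ)] using hlim
  · simpa [Real.sign_of_pos hpos, hpos] using tendsto_integral_cexp_div_sub_of_im_pos hpos hx

end SimplePole

/-- For `u ≠ 0` and `b ≠ 0`, the symmetric improper integral
`lim_{R→∞} ∫_{-R}^{R} e^{-isb/u}/(s - iu) ds` exists and equals
`2πi · sgn(u) · e^b` if `b < 0`, and `0` if `b > 0`. -/
theorem statement0 (u b : ℝ) (hu : u ≠ 0) (hb : b ≠ 0) :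
    Tendsto
      (fun R : ℝ =>
        ∫ s in (-R)..R,
          Complex.exp (-Complex.I * s * b / u) / ((s : ℂ) - Complex.I * u))
      atTop
      (nhds (if b < 0 then
          2 * Real.pi * Complex.I * Real.sign u * Real.exp b
        else 0)) := by
  have hexponent (s : ℂ) : -I * s * b / u = I * (-b / u : ℝ) * s := by push_cast; ring
  have hpole : I * (-b / u : ℝ) * (I * u) = b := by
    have hu' : (u : ℂ) ≠ 0 := Complex.ofReal_ne_zero.mpr hu
    push_cast
    field_simp
    linear_combination (-b : ℂ) * Complex.I_sq
  have hlim := statement0_general (z := I * u) (by simpa using hu)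
    (div_ne_zero (neg_ne_zero.mpr hb) hu)
  simp only [hpole, ← hexponent] at hlim
  simpa [hu] using hlim
end

section
/- Let a > 0, ω ∈ ℝ, and 0 ≤ ρ < a. With r̃(ξ) = √(ρ² + (ξ - ia)²) (principal square root), the one-sided limits of B_ω(ξ) = e^{iω r̃(ξ)}/(4π r̃(ξ)) as ξ → 0⁺ and ξ → 0⁻ exist, and their difference is lim_{ξ→0⁺} B_ω(ξ) - lim_{ξ→0⁻} B_ω(ξ) = i cosh(ω√(a² - ρ²)) / (2π√(a² - ρ²)). For ρ > a the two one-sided limits coincide. -/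
open Real Filter Topology

/-!
The square of the complex distance is `(ρ² + ξ² - a²) - 2aξ i`. As `ξ` decreases to `0` with `a > 0`
it approaches `ρ² - a²` from the lower half plane. For `|ρ| < a` this point lies on the branch cut
of the square root, so `r̃` changes from `i√(a² - ρ²)` at `ξ = 0⁻` to `-i√(a² - ρ²)` at `ξ = 0⁺`,
and subtracting the two values of the spherical wave leaves its `cos (ω r̃)` part. For `|ρ| > |a|`
the point lies off the cut and nothing jumps.
-/

theorem continuousOn_complexSqrt_im_nonneg : ContinuousOn Complex.sqrt {z | 0 ≤ z.im} := by
  have hformula : Continuous fun z : ℂ =>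
      (√((‖z‖ + z.re) / 2) + √((‖z‖ - z.re) / 2) * Complex.I : ℂ) := by
    fun_prop
  refine hformula.continuousOn.congr fun z hz => ?_
  rw [Complex.sqrt_eq_real_add_ite, if_pos (show 0 ≤ z.im from hz), one_mul]

theorem complexSqrt_eq_neg_I_mul_complexSqrt_neg {z : ℂ} (hz : z.im < 0) :
    Complex.sqrt z = -(Complex.I * Complex.sqrt (-z)) := by
  have hneg : 0 ≤ (-z).im := by simpa using hz.le
  rw [Complex.sqrt_eq_real_add_ite, Complex.sqrt_eq_real_add_ite, if_neg hz.not_ge, if_pos hneg,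
    norm_neg, Complex.neg_re, sub_neg_eq_add, ← sub_eq_add_neg]
  linear_combination (√((‖z‖ + z.re) / 2) : ℂ) * Complex.I_sq

theorem tendsto_complexSqrt_nhdsWithin_im_neg {z : ℂ} (hz : z.im ≤ 0) :
    Tendsto Complex.sqrt (𝓝[{w | w.im < 0}] z) (𝓝 (-(Complex.I * Complex.sqrt (-z)))) := by
  have hneg : Tendsto Neg.neg (𝓝[{w : ℂ | w.im < 0}] z) (𝓝[{w | 0 ≤ w.im}] (-z)) :=
    continuous_neg.continuousWithinAt.tendsto_nhdsWithin fun w (hw : w.im < 0) => by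
      simpa using hw.le
  have hsqrt : Tendsto Complex.sqrt (𝓝[{w | 0 ≤ w.im}] (-z)) (𝓝 (Complex.sqrt (-z))) :=
    continuousOn_complexSqrt_im_nonneg (-z) (by simpa using hz)
  refine ((hsqrt.comp hneg).const_mul Complex.I).neg.congr' ?_
  filter_upwards [self_mem_nhdsWithin] with w hw
  exact (complexSqrt_eq_neg_I_mul_complexSqrt_neg hw).symm

theorem continuousAt_complexSqrt {z : ℂ} (hz : z ∈ Complex.slitPlane) :
    ContinuousAt Complex.sqrt z :=
  continuousAt_cpow_const hz

theorem complexSqrt_ofReal_sq {s : ℝ} (hs : 0 ≤ s) : Complex.sqrt ((s : ℂ) ^ 2) = s := by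
  rw [← Complex.ofReal_pow, Complex.sqrt_of_nonneg (by exact_mod_cast sq_nonneg s),
    Complex.ofReal_re, Real.sqrt_sq hs]

theorem complexSqrt_neg_ofReal_sq {s : ℝ} (hs : 0 ≤ s) :
    Complex.sqrt (-(s : ℂ) ^ 2) = Complex.I * s := by
  rw [Complex.sqrt_neg_of_nonneg (by exact_mod_cast sq_nonneg s), complexSqrt_ofReal_sq hs]

section ComplexDistance

/-- The square `r̃² = ρ² + (ξ - ia)²` of the distance from the point source at position `ia` on the
beam axis to the point with cylindrical coordinates `(ρ, ξ)`. -/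
def complexDistanceSq (a ρ ξ : ℝ) : ℂ :=
  (ρ : ℂ) ^ 2 + ((ξ : ℂ) - Complex.I * (a : ℂ)) ^ 2

/-- The complex distance `r̃`, on the principal branch of the square root. -/
noncomputable def complexDistance (a ρ ξ : ℝ) : ℂ :=
  Complex.sqrt (complexDistanceSq a ρ ξ)

variable {a ρ : ℝ}

theorem complexDistanceSq_eq_re_add_im_mul_I (a ρ ξ : ℝ) :
    complexDistanceSq a ρ ξ =
      (ρ ^ 2 + ξ ^ 2 - a ^ 2 : ℝ) + (-(2 * (a * ξ)) : ℝ) * Complex.I := by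
  push_cast [complexDistanceSq]
  linear_combination (a : ℂ) ^ 2 * Complex.I_sq

theorem complexDistanceSq_im (a ρ ξ : ℝ) : (complexDistanceSq a ρ ξ).im = -(2 * (a * ξ)) := by
  rw [complexDistanceSq_eq_re_add_im_mul_I, Complex.add_im, Complex.ofReal_im,
    Complex.im_ofReal_mul, Complex.I_im, zero_add, mul_one]

theorem complexDistanceSq_zero (a ρ : ℝ) :
    complexDistanceSq a ρ 0 = ((ρ ^ 2 - a ^ 2 : ℝ) : ℂ) := by
  simp [complexDistanceSq_eq_re_add_im_mul_I]

theorem continuous_complexDistanceSq (a ρ : ℝ) : Continuous (complexDistanceSq a ρ) := by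
  unfold complexDistanceSq
  fun_prop

theorem complexDistanceSq_zero_eq_neg_sq (h : |ρ| ≤ |a|) :
    complexDistanceSq a ρ 0 = -(√(a ^ 2 - ρ ^ 2) : ℂ) ^ 2 := by
  rw [complexDistanceSq_zero, ← Complex.ofReal_pow, Real.sq_sqrt (sub_nonneg.2 (sq_le_sq.2 h)),
    ← Complex.ofReal_neg, neg_sub]

theorem tendsto_complexDistance_nhdsGT (ha : 0 < a) (h : |ρ| ≤ |a|) :
    Tendsto (complexDistance a ρ) (𝓝[>] 0) (𝓝 (-(Complex.I * √(a ^ 2 - ρ ^ 2)))) := by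
  have hbelow : Tendsto (complexDistanceSq a ρ) (𝓝[>] 0)
      (𝓝[{z | z.im < 0}] (complexDistanceSq a ρ 0)) := by
    refine (continuous_complexDistanceSq a ρ).continuousWithinAt.tendsto_nhdsWithin fun ξ hξ => ?_
    rw [Set.mem_ofPred_eq, complexDistanceSq_im]
    linarith [mul_pos ha hξ]
  have hsqrt := tendsto_complexSqrt_nhdsWithin_im_neg (z := complexDistanceSq a ρ 0)
    (by simp [complexDistanceSq_im])
  rw [show Complex.sqrt (-complexDistanceSq a ρ 0) = √(a ^ 2 - ρ ^ 2) by
    rw [complexDistanceSq_zero_eq_neg_sq h, neg_neg, complexSqrt_ofReal_sq (Real.sqrt_nonneg _)]]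
    at hsqrt
  exact hsqrt.comp hbelow

theorem tendsto_complexDistance_nhdsLT (ha : 0 ≤ a) (h : |ρ| ≤ |a|) :
    Tendsto (complexDistance a ρ) (𝓝[<] 0) (𝓝 (Complex.I * √(a ^ 2 - ρ ^ 2))) := by
  have habove : Tendsto (complexDistanceSq a ρ) (𝓝[<] 0)
      (𝓝[{z | 0 ≤ z.im}] (complexDistanceSq a ρ 0)) := by
    refine (continuous_complexDistanceSq a ρ).continuousWithinAt.tendsto_nhdsWithin fun ξ hξ => ?_
    rw [Set.mem_ofPred_eq, complexDistanceSq_im]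
    linarith [mul_nonpos_of_nonneg_of_nonpos ha (Set.mem_Iio.1 hξ).le]
  have hsqrt : Tendsto Complex.sqrt (𝓝[{z | 0 ≤ z.im}] (complexDistanceSq a ρ 0))
      (𝓝 (Complex.sqrt (complexDistanceSq a ρ 0))) :=
    continuousOn_complexSqrt_im_nonneg _ (by simp [complexDistanceSq_im])
  rw [show Complex.sqrt (complexDistanceSq a ρ 0) = Complex.I * √(a ^ 2 - ρ ^ 2) by
    rw [complexDistanceSq_zero_eq_neg_sq h, complexSqrt_neg_ofReal_sq (Real.sqrt_nonneg _)]]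
    at hsqrt
  exact hsqrt.comp habove

theorem complexDistanceSq_zero_mem_slitPlane (h : |a| < |ρ|) :
    complexDistanceSq a ρ 0 ∈ Complex.slitPlane := by
  rw [complexDistanceSq_zero, Complex.ofReal_mem_slitPlane]
  exact sub_pos.2 (sq_lt_sq.2 h)

theorem continuousAt_complexDistance_zero (h : |a| < |ρ|) :
    ContinuousAt (complexDistance a ρ) 0 :=
  (continuousAt_complexSqrt (complexDistanceSq_zero_mem_slitPlane h)).comp
    (continuous_complexDistanceSq a ρ).continuousAt

theorem complexDistance_zero_ne_zero (h : |a| < |ρ|) : complexDistance a ρ 0 ≠ 0 := by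
  have hsq : complexDistanceSq a ρ 0 ≠ 0 :=
    Complex.slitPlane_ne_zero (complexDistanceSq_zero_mem_slitPlane h)
  simp [complexDistance, Complex.sqrt, Complex.cpow_eq_zero_iff, hsq]

end ComplexDistance

/-- The outgoing spherical wave `e^{iωr}/(4πr)` at distance `r` from a point source, for complex
frequency and distance. At `r = 0` it has the junk value `0`. -/
noncomputable def sphericalWave (ω r : ℂ) : ℂ :=
  Complex.exp (Complex.I * ω * r) / (4 * (Real.pi : ℂ) * r)

/-- The complex-source beam `B_ω` of frequency `ω`, as a function of the axial coordinate `ξ` at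
distance `ρ` from the axis. -/
noncomputable def complexSourceBeam (ω : ℂ) (a ρ ξ : ℝ) : ℂ :=
  sphericalWave ω (complexDistance a ρ ξ)

theorem continuousAt_sphericalWave (ω : ℂ) {r : ℂ} (hr : r ≠ 0) :
    ContinuousAt (sphericalWave ω) r := by
  have hden : 4 * (Real.pi : ℂ) * r ≠ 0 := by simp [hr, Real.pi_ne_zero]
  unfold sphericalWave
  fun_prop (disch := exact hden)

theorem sphericalWave_neg_sub_self (ω r : ℂ) :
    sphericalWave ω (-r) - sphericalWave ω r = -(Complex.cos (ω * r) / (2 * Real.pi * r)) := by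
  rw [sphericalWave, sphericalWave, Complex.cos,
    show Complex.I * ω * -r = -(ω * r) * Complex.I by ring,
    show Complex.I * ω * r = ω * r * Complex.I by ring]
  ring

theorem sphericalWave_neg_I_mul_sub (ω s : ℂ) :
    sphericalWave ω (-(Complex.I * s)) - sphericalWave ω (Complex.I * s) =
      Complex.I * Complex.cosh (ω * s) / (2 * Real.pi * s) := by
  rw [sphericalWave_neg_sub_self, show ω * (Complex.I * s) = ω * s * Complex.I by ring,
    Complex.cos_mul_I,
    show 2 * (Real.pi : ℂ) * (Complex.I * s) = 2 * Real.pi * s * Complex.I by ring,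
    ← div_div, Complex.div_I]
  ring

theorem statement9_general (ω : ℂ) (a ρ : ℝ) :
    (|ρ| < a →
      ∃ Lp Lm : ℂ,
        Tendsto (complexSourceBeam ω a ρ) (𝓝[>] 0) (𝓝 Lp) ∧
        Tendsto (complexSourceBeam ω a ρ) (𝓝[<] 0) (𝓝 Lm) ∧
        Lp - Lm =
          Complex.I * Complex.cosh (ω * √(a ^ 2 - ρ ^ 2)) /
            (2 * Real.pi * √(a ^ 2 - ρ ^ 2))) ∧
    (|a| < |ρ| → ContinuousAt (complexSourceBeam ω a ρ) 0) := by
  refine ⟨fun hρ => ?_, fun hρ =>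
    (continuousAt_sphericalWave ω (complexDistance_zero_ne_zero hρ)).comp
      (continuousAt_complexDistance_zero hρ)⟩
  have ha : 0 < a := (abs_nonneg ρ).trans_lt hρ
  have habs : |ρ| < |a| := hρ.trans_le (le_abs_self a)
  have hr : Complex.I * (√(a ^ 2 - ρ ^ 2) : ℂ) ≠ 0 :=
    mul_ne_zero Complex.I_ne_zero <| Complex.ofReal_ne_zero.2 <|
      Real.sqrt_ne_zero'.2 (sub_pos.2 (sq_lt_sq.2 habs))
  exact ⟨_, _,
    (continuousAt_sphericalWave ω (neg_ne_zero.2 hr)).tendsto.comp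
      (tendsto_complexDistance_nhdsGT ha habs.le),
    (continuousAt_sphericalWave ω hr).tendsto.comp (tendsto_complexDistance_nhdsLT ha.le habs.le),
    sphericalWave_neg_I_mul_sub ω _⟩

/-- jump of the time-harmonic complex-source beam
`B_ω(ξ) = e^{iω r̃(ξ)}/(4π r̃(ξ))`, `r̃(ξ) = √(ρ² + (ξ - ia)²)`, across the
plane `ξ = 0`: for `ρ < a` the one-sided limits exist and their difference is
`i cosh(ω√(a² - ρ²))/(2π√(a² - ρ²))`; for `ρ > a` the one-sided limits
coincide. -/
theorem statement9 (a ω ρ : ℝ) (ha : 0 < a) (hρ : 0 ≤ ρ) :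
    let rt : ℝ → ℂ := fun ξ =>
      ((ρ : ℂ) ^ 2 + ((ξ : ℂ) - Complex.I * (a : ℂ)) ^ 2) ^ ((1 : ℂ) / 2)
    let B : ℝ → ℂ := fun ξ =>
      Complex.exp (Complex.I * (ω : ℂ) * rt ξ) / (4 * (Real.pi : ℂ) * rt ξ)
    (ρ < a →
      ∃ Lp Lm : ℂ,
        Tendsto B (nhdsWithin 0 (Set.Ioi 0)) (nhds Lp) ∧
        Tendsto B (nhdsWithin 0 (Set.Iio 0)) (nhds Lm) ∧
        Lp - Lm =
          Complex.I * (Real.cosh (ω * Real.sqrt (a ^ 2 - ρ ^ 2)) : ℂ) /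
            (2 * (Real.pi : ℂ) * (Real.sqrt (a ^ 2 - ρ ^ 2) : ℂ))) ∧
    (a < ρ →
      ∃ L : ℂ,
        Tendsto B (nhdsWithin 0 (Set.Ioi 0)) (nhds L) ∧
        Tendsto B (nhdsWithin 0 (Set.Iio 0)) (nhds L)) := by
  intro rt B
  have hB : B = complexSourceBeam ω a ρ := by
    simp only [B, rt, one_div]
    rfl
  have hjump := statement9_general ω a ρ
  rw [abs_of_pos ha, abs_of_nonneg hρ] at hjump
  rw [hB, Complex.ofReal_cosh, Complex.ofReal_mul]
  exact hjump.imp_right fun hcont h =>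
    ⟨_, (hcont h).mono_left nhdsWithin_le_nhds, (hcont h).mono_left nhdsWithin_le_nhds⟩
end

section
/- Let a > 0, h > 0 and w ∈ ℂ. Then h a ∫₀^a cosh(w q) J₁(h √(a² - q²)) / √(a² - q²) dq = cosh(w a) - cos(a √(h² - w²)), where cos denotes the complex cosine, √(h² - w²) is any complex square root of h² - w² (the right-hand side is even in it), and J₁ is the Bessel function of the first kind of order 1, given by J₁(x) = (1/π) ∫₀^π cos(θ - x sin θ) dθ. -/
open Real MeasureTheory intervalIntegral

/-- Bessel function of the first kind of order 1,
`J₁(x) = (1/π) ∫₀^π cos(θ - x sin θ) dθ`. -/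
noncomputable def besselJ1 (x : ℝ) : ℝ :=
  (1 / Real.pi) * ∫ θ in (0 : ℝ)..Real.pi, Real.cos (θ - x * Real.sin θ)

/-!
Expand `cosh (w q)` and `J₁ (h s) / s`, where `s ^ 2 = a ^ 2 - q ^ 2`, into power series and
integrate the product term by term. The terms are the Beta integrals of
`q ^ (2 m) (a ^ 2 - q ^ 2) ^ k`, whose values make the terms with `k + m = n` add up to
`-a ^ (2 n + 2) / (2 n + 2)!` times the binomial expansion of
`(w ^ 2 - h ^ 2) ^ (n + 1) - (w ^ 2) ^ (n + 1)`.
Since `w ^ 2 - h ^ 2 = -μ ^ 2`, the sum over `n` is `cosh (w a) - cos (a μ)`.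
-/

section

open Finset
open scoped Nat

theorem hasSum_sum_antidiagonal {A M : Type*} [AddMonoid A] [HasAntidiagonal A]
    [AddCommMonoid M] [TopologicalSpace M] [ContinuousAdd M] [RegularSpace M]
    {f : A × A → M} {s : M} (hf : HasSum f s) :
    HasSum (fun n => ∑ p ∈ antidiagonal n, f p) s :=
  (HasAntidiagonal.sigmaAntidiagonalEquivProd.hasSum_iff.2 hf).sigma
    fun n => (antidiagonal n).hasSum f

theorem sum_antidiagonal_choose_succ_mul_pow {R : Type*} [CommRing R] (x y : R) (n : ℕ) :
    ∑ p ∈ antidiagonal n, ((n + 1).choose (p.1 + 1) : R) * (x ^ (p.1 + 1) * y ^ p.2) =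
      (x + y) ^ (n + 1) - y ^ (n + 1) := by
  rw [(Commute.all x y).add_pow', Nat.sum_antidiagonal_succ]
  simp only [nsmul_eq_mul, Nat.choose_zero_right, Nat.cast_one, pow_zero, one_mul,
    add_sub_cancel_left]

theorem prod_range_odd_div_even (K : Type*) [Field K] [CharZero K] (n : ℕ) :
    ∏ i ∈ range n, (2 * (i : K) + 1) / (2 * i + 2) = n.centralBinom / 4 ^ n := by
  induction n with
  | zero => simp
  | succ n ih =>
    have hrec : ((n : K) + 1) * (n + 1).centralBinom = 2 * (2 * n + 1) * n.centralBinom :=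
      mod_cast n.succ_mul_centralBinom_succ
    have hn : (n : K) + 1 ≠ 0 := n.cast_add_one_ne_zero
    rw [prod_range_succ, ih, show 2 * (n : K) + 2 = 2 * (n + 1) by ring]
    field_simp
    linear_combination -2 * 4 ^ n * hrec

theorem integral_pow_mul_sq_sub_sq_pow (a : ℝ) (k m : ℕ) :
    ∫ q in (0 : ℝ)..a, q ^ (2 * m) * (a ^ 2 - q ^ 2) ^ k =
      2 ^ (2 * k + 1) * k ! * (k + 1)! * (2 * m)! / (2 * (k + m + 1))! *
        (k + m + 1).choose (k + 1) * a ^ (2 * (k + m) + 1) := by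
  have hchoose (k m : ℕ) : ((k + m + 1).choose (k + 1) : ℝ) = (k + m + 1)! / ((k + 1)! * m !) := by
    rw [add_right_comm, Nat.cast_add_choose]
  induction k generalizing m with
  | zero =>
    simp only [pow_zero, mul_one, mul_zero, zero_add, pow_one, integral_pow, Nat.choose_one_right,
      Nat.factorial_zero, Nat.factorial_succ, mul_add]
    push_cast
    field_simp
    ring
  | succ k ih =>
    have hsplit (q : ℝ) : q ^ (2 * m) * (a ^ 2 - q ^ 2) ^ (k + 1) =
        a ^ 2 * (q ^ (2 * m) * (a ^ 2 - q ^ 2) ^ k)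
          - q ^ (2 * (m + 1)) * (a ^ 2 - q ^ 2) ^ k := by
      ring
    simp_rw [hsplit]
    rw [integral_sub (Continuous.intervalIntegrable (by fun_prop) _ _)
      (Continuous.intervalIntegrable (by fun_prop) _ _),
      intervalIntegral.integral_const_mul, ih m, ih (m + 1), hchoose, hchoose, hchoose]
    rw [show k + (m + 1) + 1 = k + m + 1 + 1 by ring, show k + 1 + m + 1 = k + m + 1 + 1 by ring]
    simp only [mul_add, mul_one, Nat.factorial_succ]
    push_cast
    field_simp
    ring

theorem hasSum_intervalIntegral_mul {ι κ A : Type*} [Countable ι] [Countable κ]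
    [NormedRing A] [NormedAlgebra ℝ A] [CompleteSpace A]
    {μ : Measure ℝ} [IsLocallyFiniteMeasure μ] {a b : ℝ}
    {f : ι → ℝ → A} {g : κ → ℝ → A} {F G : ℝ → A} {u : ι → ℝ} {v : κ → ℝ}
    (hf : ∀ i, AEStronglyMeasurable (f i) (μ.restrict (Set.uIoc a b)))
    (hg : ∀ j, AEStronglyMeasurable (g j) (μ.restrict (Set.uIoc a b)))
    (hu : Summable u) (hv : Summable v)
    (hfu : ∀ i, ∀ t ∈ Set.uIoc a b, ‖f i t‖ ≤ u i) (hgv : ∀ j, ∀ t ∈ Set.uIoc a b, ‖g j t‖ ≤ v j)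
    (hF : ∀ᵐ t ∂μ, t ∈ Set.uIoc a b → HasSum (f · t) (F t))
    (hG : ∀ᵐ t ∂μ, t ∈ Set.uIoc a b → HasSum (g · t) (G t)) :
    HasSum (fun p : ι × κ => ∫ t in a..b, f p.1 t * g p.2 t ∂μ)
      (∫ t in a..b, F t * G t ∂μ) := by
  have huv : Summable fun p : ι × κ => u p.1 * v p.2 :=
    summable_mul_of_summable_norm hu.norm hv.norm
  have hbound (p : ι × κ) (t : ℝ) (ht : t ∈ Set.uIoc a b) :
      ‖f p.1 t * g p.2 t‖ ≤ u p.1 * v p.2 :=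
    norm_mul_le_of_le (hfu p.1 t ht) (hgv p.2 t ht)
  refine intervalIntegral.hasSum_integral_of_dominated_convergence (fun p _ => u p.1 * v p.2)
    (fun p => (hf p.1).mul (hg p.2)) ?_ ?_ intervalIntegrable_const ?_
  · exact fun p => .of_forall (hbound p)
  · exact .of_forall fun _ _ => huv
  · filter_upwards [hF, hG] with t hFt hGt ht
    exact HasSum.mul (f := (f · t)) (g := (g · t)) (hFt ht) (hGt ht)
      (.of_norm_bounded huv fun p => hbound p t ht)

theorem hasSum_cosh_sub_cos (x y : ℂ) :
    HasSum (fun n : ℕ => ((x ^ 2) ^ (n + 1) - (-y ^ 2) ^ (n + 1)) / (2 * (n + 1))!)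
      (Complex.cosh x - Complex.cos y) := by
  have hsum := (hasSum_nat_add_iff' 1).2 ((Complex.hasSum_cosh x).sub (Complex.hasSum_cos y))
  simp only [sum_range_one, mul_zero, pow_zero, one_mul, sub_self, sub_zero] at hsum
  refine hsum.congr_fun fun n => ?_
  rw [neg_pow, ← pow_mul, ← pow_mul]
  ring

/-- The Bessel function `J₁` at a complex argument, through the same integral as `besselJ1`. -/
noncomputable def complexBesselJ1 (z : ℂ) : ℂ :=
  (1 / π) * ∫ θ in (0 : ℝ)..π, Complex.cos (θ - z * Real.sin θ)

theorem ofReal_besselJ1 (x : ℝ) : (besselJ1 x : ℂ) = complexBesselJ1 x := by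
  simp only [besselJ1, complexBesselJ1, Complex.ofReal_mul, ← intervalIntegral.integral_ofReal]
  push_cast
  rfl

theorem integral_cos_mul_cos_mul_sin (z : ℂ) :
    ∫ θ in (0 : ℝ)..π, Complex.cos θ * Complex.cos (z * Real.sin θ) = 0 := by
  have hreflect := integral_comp_sub_left (a := 0) (b := π)
    (fun θ : ℝ => Complex.cos θ * Complex.cos (z * Real.sin θ)) π
  simp only [Real.sin_pi_sub, Complex.ofReal_sub, Complex.cos_pi_sub, neg_mul,
    intervalIntegral.integral_neg, sub_self, sub_zero] at hreflect
  exact self_eq_neg.1 hreflect.symm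

theorem complexBesselJ1_eq_integral_sin_mul_sin (z : ℂ) :
    complexBesselJ1 z =
      (1 / π) * ∫ θ in (0 : ℝ)..π, (Real.sin θ : ℂ) * Complex.sin (z * Real.sin θ) := by
  simp_rw [complexBesselJ1, Complex.cos_sub]
  rw [integral_add (Continuous.intervalIntegrable (by fun_prop) _ _)
    (Continuous.intervalIntegrable (by fun_prop) _ _), integral_cos_mul_cos_mul_sin, zero_add]
  simp only [Complex.ofReal_sin]

theorem integral_sin_mul_sin_series_term (z : ℂ) (k : ℕ) :
    ∫ θ in (0 : ℝ)..π,
        (Real.sin θ : ℂ) * ((-1) ^ k * (z * Real.sin θ) ^ (2 * k + 1) / (2 * k + 1)!) =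
      π * ((-1) ^ k / (k ! * (k + 1)!) * (z / 2) ^ (2 * k + 1)) := by
  have hterm (θ : ℝ) :
      (Real.sin θ : ℂ) * ((-1) ^ k * (z * Real.sin θ) ^ (2 * k + 1) / (2 * k + 1)!) =
        (-1) ^ k * z ^ (2 * k + 1) / (2 * k + 1)! * (Real.sin θ ^ (2 * (k + 1)) : ℝ) := by
    push_cast
    ring
  have hbinom : ((k + 1).centralBinom : ℂ) = (2 * (k + 1))! / ((k + 1)! * (k + 1)!) := by
    rw [Nat.centralBinom, two_mul, Nat.cast_add_choose]
  simp_rw [hterm]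
  rw [intervalIntegral.integral_const_mul, intervalIntegral.integral_ofReal, integral_sin_pow_even,
    prod_range_odd_div_even]
  push_cast
  rw [hbinom, show (4 : ℂ) ^ (k + 1) = 2 ^ (2 * (k + 1)) by rw [pow_mul]; norm_num]
  simp only [mul_add, mul_one, Nat.factorial_succ, div_pow]
  push_cast
  have hk : (k : ℂ) + 1 ≠ 0 := k.cast_add_one_ne_zero
  have h2k : 2 * (k : ℂ) + 1 ≠ 0 := mod_cast (2 * k).succ_ne_zero
  have hfac (n : ℕ) : (n ! : ℂ) ≠ 0 := mod_cast n.factorial_ne_zero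
  field_simp [hfac]
  ring

theorem hasSum_complexBesselJ1 (z : ℂ) :
    HasSum (fun k : ℕ => (-1) ^ k / (k ! * (k + 1)!) * (z / 2) ^ (2 * k + 1))
      (complexBesselJ1 z) := by
  have hbound (k : ℕ) (θ : ℝ) :
      ‖(Real.sin θ : ℂ) * ((-1) ^ k * (z * Real.sin θ) ^ (2 * k + 1) / (2 * k + 1)!)‖ ≤
        ‖z‖ ^ (2 * k + 1) / (2 * k + 1)! := by
    have hsin := Real.abs_sin_le_one θ
    simp only [norm_mul, norm_div, norm_pow, norm_neg, norm_one, one_pow, one_mul,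
      Complex.norm_real, Real.norm_eq_abs, Complex.norm_natCast]
    calc |Real.sin θ| * ((‖z‖ * |Real.sin θ|) ^ (2 * k + 1) / (2 * k + 1)!)
        ≤ 1 * ((‖z‖ * 1) ^ (2 * k + 1) / (2 * k + 1)!) := by gcongr
      _ = ‖z‖ ^ (2 * k + 1) / (2 * k + 1)! := by ring
  have hsum : HasSum
      (fun k : ℕ => ∫ θ in (0 : ℝ)..π,
        (Real.sin θ : ℂ) * ((-1) ^ k * (z * Real.sin θ) ^ (2 * k + 1) / (2 * k + 1)!))
      (∫ θ in (0 : ℝ)..π, (Real.sin θ : ℂ) * Complex.sin (z * Real.sin θ)) :=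
    intervalIntegral.hasSum_integral_of_dominated_convergence
      (fun k _ => ‖z‖ ^ (2 * k + 1) / (2 * k + 1)!)
      (fun k => Continuous.aestronglyMeasurable (by fun_prop))
      (fun k => .of_forall fun θ _ => hbound k θ)
      (.of_forall fun _ _ => (Real.hasSum_sinh ‖z‖).summable) intervalIntegrable_const
      (.of_forall fun _ _ => (Complex.hasSum_sin _).mul_left _)
  simp_rw [integral_sin_mul_sin_series_term] at hsum
  rw [complexBesselJ1_eq_integral_sin_mul_sin, one_div]
  simpa [Complex.ofReal_ne_zero.2 Real.pi_ne_zero] using hsum.mul_left (π : ℂ)⁻¹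

theorem hasSum_complexBesselJ1_mul_div (h : ℂ) {s : ℂ} (hs : s ≠ 0) :
    HasSum (fun k : ℕ => (-1) ^ k / (k ! * (k + 1)!) * (h / 2) ^ (2 * k + 1) * (s ^ 2) ^ k)
      (complexBesselJ1 (h * s) / s) := by
  refine ((hasSum_complexBesselJ1 (h * s)).div_const s).congr_fun fun k => ?_
  rw [mul_div_right_comm h, mul_pow, ← pow_mul]
  field_simp
  ring

theorem abs_le_abs_of_mem_uIoc_zero {a q : ℝ} (hq : q ∈ Set.uIoc 0 a) : |q| ≤ |a| := by
  simpa using Set.abs_sub_left_of_mem_uIcc (Set.uIoc_subset_uIcc hq)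

theorem norm_mul_sq_sub_sq_pow_le {a q : ℝ} (hqa : |q| ≤ |a|) (c : ℂ) (k : ℕ) :
    ‖c * ((a : ℂ) ^ 2 - (q : ℂ) ^ 2) ^ k‖ ≤ ‖c * ((a : ℂ) ^ 2) ^ k‖ := by
  have hnorm : ‖(a : ℂ) ^ 2 - (q : ℂ) ^ 2‖ ≤ ‖(a : ℂ) ^ 2‖ := by
    norm_cast
    rw [Real.norm_of_nonneg (sub_nonneg.2 (sq_le_sq.2 hqa)), Real.norm_of_nonneg (sq_nonneg a)]
    exact sub_le_self _ (sq_nonneg q)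
  rw [norm_mul, norm_mul, norm_pow, norm_pow _ k]
  gcongr

theorem ae_hasSum_complexBesselJ1_mul_sqrt_div (a : ℝ) (h : ℂ) :
    ∀ᵐ q : ℝ, q ∈ Set.uIoc 0 a →
      HasSum (fun k : ℕ => (-1) ^ k / (k ! * (k + 1)!) * (h / 2) ^ (2 * k + 1) *
          ((a : ℂ) ^ 2 - (q : ℂ) ^ 2) ^ k)
        (complexBesselJ1 (h * √(a ^ 2 - q ^ 2)) / √(a ^ 2 - q ^ 2)) := by
  -- At `q = ±a` the quotient has the junk value `0` instead of its limit `h / 2`.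
  filter_upwards [volume.ae_ne a, volume.ae_ne (-a)] with q hqa hqna hq
  have hpos : 0 < a ^ 2 - q ^ 2 := by
    have hne : q ^ 2 ≠ a ^ 2 := sq_eq_sq_iff_eq_or_eq_neg.not.2 (not_or.2 ⟨hqa, hqna⟩)
    exact sub_pos.2 ((sq_le_sq.2 (abs_le_abs_of_mem_uIoc_zero hq)).lt_of_ne hne)
  have hsq : ((√(a ^ 2 - q ^ 2) : ℝ) : ℂ) ^ 2 = (a : ℂ) ^ 2 - (q : ℂ) ^ 2 :=
    mod_cast Real.sq_sqrt hpos.le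
  simpa only [hsq] using hasSum_complexBesselJ1_mul_div h
    (Complex.ofReal_ne_zero.2 (Real.sqrt_pos.2 hpos).ne')

theorem hasSum_integral_cosh_mul_complexBesselJ1 {a : ℝ} (ha : a ≠ 0) (h w : ℂ) :
    HasSum
      (fun p : ℕ × ℕ => (-1) ^ p.1 / (p.1 ! * (p.1 + 1)!) * (h / 2) ^ (2 * p.1 + 1) *
        (w ^ (2 * p.2) / (2 * p.2)!) *
        (∫ q in (0 : ℝ)..a, q ^ (2 * p.2) * (a ^ 2 - q ^ 2) ^ p.1 : ℝ))
      (∫ q in (0 : ℝ)..a, Complex.cosh (w * q) *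
        (complexBesselJ1 (h * √(a ^ 2 - q ^ 2)) / √(a ^ 2 - q ^ 2))) := by
  have hcosh_le (m : ℕ) (q : ℝ) (hq : q ∈ Set.uIoc 0 a) :
      ‖(w * q) ^ (2 * m) / (2 * m)!‖ ≤ (‖w‖ * |a|) ^ (2 * m) / (2 * m)! := by
    rw [norm_div, norm_pow, norm_mul, Complex.norm_real, Real.norm_eq_abs, Complex.norm_natCast]
    have hqa := abs_le_abs_of_mem_uIoc_zero hq
    gcongr
  have hsum := hasSum_intervalIntegral_mul
    (fun k => Continuous.aestronglyMeasurable (by fun_prop))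
    (fun m => Continuous.aestronglyMeasurable (by fun_prop))
    (hasSum_complexBesselJ1_mul_div h (Complex.ofReal_ne_zero.2 ha)).summable.norm
    (Real.hasSum_cosh (‖w‖ * |a|)).summable
    (fun k q hq => norm_mul_sq_sub_sq_pow_le (abs_le_abs_of_mem_uIoc_zero hq) _ k) hcosh_le
    (ae_hasSum_complexBesselJ1_mul_sqrt_div a h)
    (.of_forall fun q _ => Complex.hasSum_cosh (w * q))
  simp_rw [mul_comm (Complex.cosh _)]
  refine hsum.congr_fun fun p => ?_
  rw [← intervalIntegral.integral_ofReal, ← intervalIntegral.integral_const_mul]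
  refine integral_congr fun q _ => ?_
  push_cast
  ring

theorem mul_besselJ1_cosh_series_term (a : ℝ) (h w : ℂ) (k m : ℕ) :
    h * a * ((-1) ^ k / (k ! * (k + 1)!) * (h / 2) ^ (2 * k + 1) * (w ^ (2 * m) / (2 * m)!) *
        (∫ q in (0 : ℝ)..a, q ^ (2 * m) * (a ^ 2 - q ^ 2) ^ k : ℝ)) =
      -((k + m + 1).choose (k + 1) * ((-(a * h) ^ 2) ^ (k + 1) * ((a * w) ^ 2) ^ m)) /
        (2 * (k + m + 1))! := by
  rw [integral_pow_mul_sq_sub_sq_pow, neg_pow ((a * h) ^ 2)]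
  push_cast
  have hfac (n : ℕ) : (n ! : ℂ) ≠ 0 := mod_cast n.factorial_ne_zero
  rw [div_pow]
  field_simp [hfac]
  ring

theorem statement11_general (a : ℝ) (h w μ : ℂ) (hμ : μ ^ 2 = h ^ 2 - w ^ 2) :
    h * a *
        ∫ q in (0 : ℝ)..a,
          Complex.cosh (w * q) *
            (complexBesselJ1 (h * √(a ^ 2 - q ^ 2)) / √(a ^ 2 - q ^ 2)) =
      Complex.cosh (w * a) - Complex.cos (a * μ) := by
  rcases eq_or_ne a 0 with rfl | ha
  · simp
  have hdouble := (hasSum_integral_cosh_mul_complexBesselJ1 ha h w).mul_left (h * a)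
  simp_rw [mul_besselJ1_cosh_series_term] at hdouble
  refine (hasSum_sum_antidiagonal hdouble).unique
    ((hasSum_cosh_sub_cos (w * a) (a * μ)).congr_fun fun n => ?_)
  have hroot : -(a * μ) ^ 2 = -(a * h) ^ 2 + (a * w) ^ 2 := by
    rw [mul_pow, hμ]
    ring
  rw [hroot, mul_comm w, ← neg_sub, ← sum_antidiagonal_choose_succ_mul_pow, ← sum_neg_distrib,
    sum_div]
  refine sum_congr rfl fun p hp => ?_
  rw [mem_antidiagonal.1 hp]

end

/-- the Bessel integral
`h a ∫₀^a cosh(wq) J₁(h√(a²-q²))/√(a²-q²) dq = cosh(wa) - cos(a√(h²-w²))`,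
for any complex square root `μ` of `h² - w²` (the right side is even in `μ`). -/
theorem statement11 (a h : ℝ) (ha : 0 < a) (hh : 0 < h) (w μ : ℂ)
    (hμ : μ ^ 2 = (h : ℂ) ^ 2 - w ^ 2) :
    (h : ℂ) * (a : ℂ) *
        ∫ q in (0 : ℝ)..a,
          Complex.cosh (w * (q : ℂ)) *
            ((besselJ1 (h * Real.sqrt (a ^ 2 - q ^ 2)) : ℂ) /
              (Real.sqrt (a ^ 2 - q ^ 2) : ℂ)) =
      Complex.cosh (w * (a : ℂ)) - Complex.cos ((a : ℂ) * μ) := by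
  simpa only [ofReal_besselJ1, Complex.ofReal_mul] using statement11_general a h w μ hμ
end

section
/- Let a > 0, h > 0 and l ∈ ℝ. Then 1 - a h ∫₀^a J₁(h ρ)/√(a² - ρ²) dρ + l ∫₀^a ρ J₀(h ρ)/√(a² - ρ²) dρ = cos(h a) + (l/h) sin(h a), where J₀(x) = (1/π)∫₀^π cos(x sin θ) dθ and J₁(x) = (1/π)∫₀^π cos(θ - x sin θ) dθ are the Bessel functions of the first kind of orders 0 and 1. -/
open Real MeasureTheory intervalIntegral

/-- Bessel function of the first kind of order 0,
`J₀(x) = (1/π) ∫₀^π cos(x sin θ) dθ`. -/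
noncomputable def besselJ0 (x : ℝ) : ℝ :=
  (1 / Real.pi) * ∫ θ in (0 : ℝ)..Real.pi, Real.cos (x * Real.sin θ)

open scoped Nat

/-!
With `ρ = a sin θ` the weight `1 / √(a² - ρ²)` disappears, and with `z = h a` it remains to show
`∫₀^{π/2} sin θ J₀(z sin θ) dθ = sinc z` and `z ∫₀^{π/2} J₁(z sin θ) dθ = 1 - cos z`.
Both follow by integrating the Maclaurin series of the Bessel functions term by term: multiplication
by Wallis' integrals `∫₀^{π/2} sin^{2k+1} θ dθ = (2ᵏ k!)² / (2k+1)!` turns the coefficients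
`1 / (2ᵏ k!)²` of `J₀` and `1 / (2^{2k+1} k! (k+1)!)` of `J₁` into `1 / (2k+1)!` and `1 / (2k+2)!`.
-/

theorem integral_div_sqrt_sq_sub_sq {a : ℝ} (ha : 0 < a) (g : ℝ → ℝ) :
    ∫ ρ in (0 : ℝ)..a, g ρ / √(a ^ 2 - ρ ^ 2) = ∫ θ in (0 : ℝ)..π / 2, g (a * sin θ) := by
  have mul_cos_pos {θ : ℝ} (hθ : θ ∈ Set.Ioo 0 (π / 2)) : 0 < a * cos θ :=
    mul_pos ha (cos_pos_of_mem_Ioo ⟨by linarith [hθ.1, pi_pos], hθ.2⟩)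
  have endpoints : Set.Ioo (min 0 (π / 2)) (max 0 (π / 2)) = Set.Ioo 0 (π / 2) := by
    rw [min_eq_left pi_div_two_pos.le, max_eq_right pi_div_two_pos.le]
  have substitution := integral_comp_mul_deriv_of_deriv_nonneg (a := 0) (b := π / 2)
    (f := fun θ ↦ a * sin θ) (f' := fun θ ↦ a * cos θ) (g := fun ρ ↦ g ρ / √(a ^ 2 - ρ ^ 2))
    (by fun_prop) (fun θ _ ↦ (hasDerivAt_sin θ).const_mul a)
    (fun θ hθ ↦ (mul_cos_pos (endpoints ▸ hθ)).le)
  simp only [sin_zero, sin_pi_div_two, mul_zero, mul_one] at substitution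
  rw [← substitution]
  refine integral_congr_Ioo_of_le pi_div_two_pos.le fun θ hθ ↦ ?_
  have sqrt_eq : √(a ^ 2 - (a * sin θ) ^ 2) = a * cos θ := by
    rw [← sqrt_sq (mul_cos_pos hθ).le]
    congr 1
    linear_combination -a ^ 2 * sin_sq_add_cos_sq θ
  simp only [Function.comp_apply, sqrt_eq, div_mul_cancel₀ _ (mul_cos_pos hθ).ne']

theorem integral_sin_pow_even_eq_factorial (k : ℕ) :
    ∫ θ in (0 : ℝ)..π, sin θ ^ (2 * k) = π * (2 * k)! / (2 ^ k * k !) ^ 2 := by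
  induction k with
  | zero => simp
  | succ k ih =>
    rw [mul_add_one, integral_sin_pow, ih]
    simp only [sin_zero, sin_pi, Nat.factorial_succ]
    push_cast
    field_simp
    ring

theorem integral_sin_pow_odd_zero_pi_div_two (k : ℕ) :
    ∫ θ in (0 : ℝ)..π / 2, sin θ ^ (2 * k + 1) = (2 ^ k * k !) ^ 2 / (2 * k + 1)! := by
  induction k with
  | zero => simp
  | succ k ih =>
    rw [mul_add_one, add_right_comm, integral_sin_pow, ih]
    simp only [sin_zero, cos_pi_div_two, Nat.factorial_succ]
    push_cast
    field_simp
    ring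

theorem hasSum_integral_mul_comp_mul {ι : Type*} [Countable ι] {c : ι → ℝ} {e : ι → ℕ} {f : ℝ → ℝ}
    (hf : ∀ y, HasSum (fun k ↦ c k * y ^ e k) (f y)) {w s : ℝ → ℝ} (hw : Continuous w)
    (hs : Continuous s) (hs_le : ∀ θ, |s θ| ≤ 1) (A B x : ℝ) :
    HasSum (fun k ↦ c k * x ^ e k * ∫ θ in A..B, w θ * s θ ^ e k)
      (∫ θ in A..B, w θ * f (x * s θ)) := by
  simp only [← intervalIntegral.integral_const_mul]
  refine hasSum_integral_of_dominated_convergence (fun k θ ↦ |c k * x ^ e k| * |w θ|)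
    (fun k ↦ Continuous.aestronglyMeasurable (by fun_prop)) (fun k ↦ .of_forall fun θ _ ↦ ?_)
    (.of_forall fun θ _ ↦ (hf x).summable.abs.mul_right _) ?_ (.of_forall fun θ _ ↦ ?_)
  · rw [norm_eq_abs, abs_mul (c k * x ^ e k), abs_mul (w θ), abs_pow (s θ)]
    exact mul_le_mul_of_nonneg_left
      (mul_le_of_le_one_right (abs_nonneg _) (pow_le_one₀ (abs_nonneg _) (hs_le θ))) (abs_nonneg _)
  · simp only [tsum_mul_right]
    exact Continuous.intervalIntegrable (by fun_prop) _ _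
  · refine ((hf (x * s θ)).mul_left (w θ)).congr_fun fun k ↦ ?_
    ring

theorem hasSum_sinc (x : ℝ) :
    HasSum (fun k : ℕ ↦ (-1) ^ k * x ^ (2 * k) / (2 * k + 1)!) (sinc x) := by
  rcases eq_or_ne x 0 with rfl | hx
  · convert hasSum_single (f := fun k : ℕ ↦ (-1) ^ k * (0 : ℝ) ^ (2 * k) / (2 * k + 1)!) 0
      fun k hk ↦ by simp [hk] using 1
    simp
  · rw [sinc_of_ne_zero hx]
    refine ((hasSum_sin x).div_const x).congr_fun fun k ↦ ?_
    rw [pow_succ]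
    field_simp

theorem hasSum_one_sub_cos (x : ℝ) :
    HasSum (fun k : ℕ ↦ (-1) ^ k * x ^ (2 * k + 2) / (2 * k + 2)!) (1 - cos x) := by
  have tail := ((hasSum_nat_add_iff' 1).2 (hasSum_cos x)).neg
  simp only [Finset.sum_range_one, mul_zero, pow_zero, Nat.factorial_zero, Nat.cast_one, div_one,
    mul_one, neg_sub] at tail
  refine tail.congr_fun fun k ↦ ?_
  rw [mul_add_one]
  ring

theorem hasSum_besselJ0 (x : ℝ) :
    HasSum (fun k : ℕ ↦ (-1) ^ k / (2 ^ k * k !) ^ 2 * x ^ (2 * k)) (besselJ0 x) := by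
  have cos_series (y : ℝ) : HasSum (fun k : ℕ ↦ (-1) ^ k / (2 * k)! * y ^ (2 * k)) (cos y) :=
    (hasSum_cos y).congr_fun fun k ↦ by ring
  have series := (hasSum_integral_mul_comp_mul cos_series (w := fun _ ↦ 1) continuous_const
    continuous_sin abs_sin_le_one 0 π x).mul_left (1 / π)
  simp only [one_mul, integral_sin_pow_even_eq_factorial] at series
  refine series.congr_fun fun k ↦ ?_
  field_simp

theorem besselJ1_eq_integral_sin_mul_sin (x : ℝ) :
    besselJ1 x = 1 / π * ∫ θ in (0 : ℝ)..π, sin θ * sin (x * sin θ) := by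
  have integral_cos_part : ∫ θ in (0 : ℝ)..π, cos θ * cos (x * sin θ) = 0 := by
    have reflection := intervalIntegral.integral_comp_sub_left (a := 0) (b := π)
      (fun θ ↦ cos θ * cos (x * sin θ)) π
    simp only [cos_pi_sub, sin_pi_sub, sub_self, sub_zero, neg_mul,
      intervalIntegral.integral_neg] at reflection
    linarith
  simp only [besselJ1, cos_sub]
  rw [intervalIntegral.integral_add (Continuous.intervalIntegrable (by fun_prop) _ _)
    (Continuous.intervalIntegrable (by fun_prop) _ _), integral_cos_part, zero_add]

theorem hasSum_besselJ1 (x : ℝ) :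
    HasSum (fun k : ℕ ↦ (-1) ^ k / (2 ^ (2 * k + 1) * k ! * (k + 1)!) * x ^ (2 * k + 1))
      (besselJ1 x) := by
  have sin_series (y : ℝ) :
      HasSum (fun k : ℕ ↦ (-1) ^ k / (2 * k + 1)! * y ^ (2 * k + 1)) (sin y) :=
    (hasSum_sin y).congr_fun fun k ↦ by ring
  have series := (hasSum_integral_mul_comp_mul sin_series continuous_sin
    continuous_sin abs_sin_le_one 0 π x).mul_left (1 / π)
  rw [besselJ1_eq_integral_sin_mul_sin]
  refine series.congr_fun fun k ↦ ?_
  simp only [← pow_succ']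
  rw [add_assoc, ← mul_add_one, integral_sin_pow_even_eq_factorial, mul_add_one]
  simp only [Nat.factorial_succ]
  push_cast
  field_simp
  ring

theorem integral_sin_mul_besselJ0_mul_sin (z : ℝ) :
    ∫ θ in (0 : ℝ)..π / 2, sin θ * besselJ0 (z * sin θ) = sinc z := by
  have series := hasSum_integral_mul_comp_mul hasSum_besselJ0 continuous_sin continuous_sin
    abs_sin_le_one 0 (π / 2) z
  refine series.unique ((hasSum_sinc z).congr_fun fun k ↦ ?_)
  simp only [← pow_succ', integral_sin_pow_odd_zero_pi_div_two]
  field_simp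

theorem mul_integral_besselJ1_mul_sin (z : ℝ) :
    z * ∫ θ in (0 : ℝ)..π / 2, besselJ1 (z * sin θ) = 1 - cos z := by
  have series := (hasSum_integral_mul_comp_mul hasSum_besselJ1 (w := fun _ ↦ 1) continuous_const
    continuous_sin abs_sin_le_one 0 (π / 2) z).mul_left z
  simp only [one_mul, integral_sin_pow_odd_zero_pi_div_two] at series
  refine series.unique ((hasSum_one_sub_cos z).congr_fun fun k ↦ ?_)
  simp only [Nat.factorial_succ]
  push_cast
  field_simp
  ring

theorem integral_mul_besselJ0_div_sqrt {a : ℝ} (ha : 0 < a) (h : ℝ) :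
    ∫ ρ in (0 : ℝ)..a, ρ * besselJ0 (h * ρ) / √(a ^ 2 - ρ ^ 2) = a * sinc (h * a) := by
  rw [integral_div_sqrt_sq_sub_sq ha fun ρ ↦ ρ * besselJ0 (h * ρ),
    ← integral_sin_mul_besselJ0_mul_sin, ← intervalIntegral.integral_const_mul]
  simp only [mul_assoc]

theorem mul_integral_besselJ1_div_sqrt {a : ℝ} (ha : 0 < a) (h : ℝ) :
    a * h * ∫ ρ in (0 : ℝ)..a, besselJ1 (h * ρ) / √(a ^ 2 - ρ ^ 2) = 1 - cos (h * a) := by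
  rw [integral_div_sqrt_sq_sub_sq ha fun ρ ↦ besselJ1 (h * ρ), ← mul_integral_besselJ1_mul_sin,
    mul_comm a h]
  simp only [mul_assoc]

theorem statement13_general {a : ℝ} (ha : 0 < a) (h l : ℝ) :
    1 - a * h * (∫ ρ in (0 : ℝ)..a, besselJ1 (h * ρ) / √(a ^ 2 - ρ ^ 2))
      + l * (∫ ρ in (0 : ℝ)..a, ρ * besselJ0 (h * ρ) / √(a ^ 2 - ρ ^ 2)) =
    cos (h * a) + l * (a * sinc (h * a)) := by
  rw [mul_integral_besselJ1_div_sqrt ha, integral_mul_besselJ0_div_sqrt ha, sub_sub_cancel]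

/-- Fourier transform of the static complex point source:
`1 - a h ∫₀^a J₁(hρ)/√(a²-ρ²) dρ + l ∫₀^a ρ J₀(hρ)/√(a²-ρ²) dρ
  = cos(ha) + (l/h) sin(ha)`. -/
theorem statement13 (a h l : ℝ) (ha : 0 < a) (hh : 0 < h) :
    1 - a * h * (∫ ρ in (0 : ℝ)..a, besselJ1 (h * ρ) / Real.sqrt (a ^ 2 - ρ ^ 2))
      + l * (∫ ρ in (0 : ℝ)..a, ρ * besselJ0 (h * ρ) / Real.sqrt (a ^ 2 - ρ ^ 2)) =
    Real.cos (h * a) + (l / h) * Real.sin (h * a) := by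
  rw [statement13_general ha, sinc_of_ne_zero (mul_pos hh ha).ne']
  field_simp
end

section
/- Let a > 0, h ≥ 0, l, ω ∈ ℝ, and ε > 0. Set η = ε - i, |η| = √(1+ε²), ω_ε = ω - iεl, l_ε = l - iεω, h_ε = |η| h, and let μ_ε be a complex square root of h_ε² - ω_ε² (the right-hand side below is even in μ_ε). Write ρ₀(q) = √(a² - q²). Then cosh(ω_ε a) - iε sinh(ω_ε a) + ((1+ε²)/2) ∫_{-a}^{a} e^{ω_ε q} [ -(h(a - iεq)/(|η| ρ₀(q))) J₁(h_ε ρ₀(q)) + l J₀(h_ε ρ₀(q)) ] dq = cos(μ_ε a) + (l_ε/μ_ε) sin(μ_ε a), where J₀(x) = (1/π)∫₀^π cos(x sin θ) dθ and J₁(x) = (1/π)∫₀^π cos(θ - x sin θ) dθ are the Bessel functions of the first kind (the case μ_ε = 0 is interpreted by continuity, sin(μ_ε a)/μ_ε = a). -/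
open Real MeasureTheory intervalIntegral

/-!
The cylindrical wave `u = exp (w z) J₀(H r)` solves the Helmholtz equation with wave number `μ`,
where `μ² = H² - w²`, so `t` times its mean over the sphere of radius `t` is `sin (μ t) / μ`:
differentiating in `t`, using the Bessel recurrences and integrating by parts along a meridian
shows that this function `F` satisfies `F'' = -μ² F`. Under `q = a sin φ`, the value `F a` is the
`J₀` integral and `F' a = cos (μ a)` involves the integral of `J₁ / ρ₀`. Integrating the derivative
of `u` along the meridian from pole to pole evaluates the integral of `q J₁ / ρ₀` through
`sinh (w a)`. The claimed identity is the combination of these three with coefficients `l_ε`, `1`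
and `-iε`, because `(1 + ε²) l = l_ε + iε ω_ε`.
-/

section ParametricIntegral

variable {𝕜 E : Type*} [RCLike 𝕜] [NormedAddCommGroup E] [NormedSpace ℝ E] [NormedSpace 𝕜 E]

lemma hasDerivAt_intervalIntegral_of_continuous {f f' : 𝕜 → ℝ → E}
    (hf : ∀ t, Continuous (f t)) (hf' : Continuous (Function.uncurry f'))
    (hff' : ∀ t x, HasDerivAt (fun s ↦ f s x) (f' t x) t) (a b : ℝ) (t₀ : 𝕜) :
    HasDerivAt (fun t ↦ ∫ x in a..b, f t x) (∫ x in a..b, f' t₀ x) t₀ := by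
  obtain ⟨M, hM⟩ := ((isCompact_closedBall t₀ 1).prod
    (isCompact_uIcc (a := a) (b := b))).exists_bound_of_continuousOn hf'.continuousOn
  refine (hasDerivAt_integral_of_dominated_loc_of_deriv_le (bound := fun _ ↦ M)
    (Metric.closedBall_mem_nhds t₀ one_pos) (.of_forall fun t ↦ (hf t).aestronglyMeasurable)
    ((hf t₀).intervalIntegrable a b) (hf'.uncurry_left t₀).aestronglyMeasurable ?_
    intervalIntegrable_const (.of_forall fun x _ t _ ↦ hff' t x)).2
  exact .of_forall fun x hx t ht ↦ hM (t, x) ⟨ht, Set.uIoc_subset_uIcc hx⟩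

end ParametricIntegral

lemma eq_and_eq_of_hasDerivAt_secondOrder {E : Type*} [NormedAddCommGroup E] [NormedSpace ℝ E]
    {A : E →L[ℝ] E} {x₁ v₁ x₂ v₂ : ℝ → E} {t₀ : ℝ}
    (hx₁ : ∀ t, HasDerivAt x₁ (v₁ t) t) (hv₁ : ∀ t, HasDerivAt v₁ (A (x₁ t)) t)
    (hx₂ : ∀ t, HasDerivAt x₂ (v₂ t) t) (hv₂ : ∀ t, HasDerivAt v₂ (A (x₂ t)) t)
    (hx : x₁ t₀ = x₂ t₀) (hv : v₁ t₀ = v₂ t₀) : x₁ = x₂ ∧ v₁ = v₂ := by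
  let B : E × E →L[ℝ] E × E :=
    (ContinuousLinearMap.snd ℝ E E).prod (A ∘L ContinuousLinearMap.fst ℝ E E)
  have heq : (fun t ↦ (x₁ t, v₁ t)) = fun t ↦ (x₂ t, v₂ t) :=
    ODE_solution_unique_univ (v := fun _ ↦ B) (s := fun _ ↦ Set.univ) (t₀ := t₀)
      (fun _ ↦ B.lipschitz.lipschitzOnWith)
      (fun t ↦ ⟨(hx₁ t).prodMk (hv₁ t), Set.mem_univ _⟩)
      (fun t ↦ ⟨(hx₂ t).prodMk (hv₂ t), Set.mem_univ _⟩) (Prod.ext hx hv)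
  exact ⟨funext fun t ↦ congr_arg Prod.fst (congr_fun heq t),
    funext fun t ↦ congr_arg Prod.snd (congr_fun heq t)⟩

/-- `sin (μ t) / μ`, extended to `μ = 0` by continuity: the solution of `f'' = -μ² f` with
`f 0 = 0` and `f' 0 = 1`. -/
noncomputable def sinDiv (μ : ℂ) (t : ℝ) : ℂ :=
  if μ = 0 then (t : ℂ) else Complex.sin (μ * t) / μ

lemma mul_sinDiv (μ : ℂ) (t : ℝ) : μ * sinDiv μ t = Complex.sin (μ * t) := by
  by_cases hμ : μ = 0
  · simp [hμ]
  · rw [sinDiv, if_neg hμ, mul_div_cancel₀ _ hμ]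

lemma sinDiv_zero_right (μ : ℂ) : sinDiv μ 0 = 0 := by
  simp [sinDiv]

lemma hasDerivAt_sinDiv (μ : ℂ) (t : ℝ) : HasDerivAt (sinDiv μ) (Complex.cos (μ * t)) t := by
  by_cases hμ : μ = 0
  · have hid : sinDiv μ = fun t : ℝ ↦ (t : ℂ) := funext fun _ ↦ if_pos hμ
    rw [hid]
    simpa [hμ] using (hasDerivAt_id t).ofReal_comp
  · have hdiv : sinDiv μ = fun t : ℝ ↦ Complex.sin (μ * t) / μ := funext fun _ ↦ if_neg hμ
    simpa [hdiv, hμ] using (((hasDerivAt_id (t : ℂ)).const_mul μ).csin.comp_ofReal).div_const μ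

lemma hasDerivAt_cos_mul_ofReal (μ : ℂ) (t : ℝ) :
    HasDerivAt (fun s : ℝ ↦ Complex.cos (μ * s)) (-μ ^ 2 * sinDiv μ t) t := by
  convert! ((hasDerivAt_id (t : ℂ)).const_mul μ).ccos.comp_ofReal using 1
  simp only [id_eq, ← mul_sinDiv]
  ring

/-- The Bessel function of the first kind of integer order and complex argument, defined by
Bessel's integral. -/
noncomputable def besselJ (n : ℤ) (z : ℂ) : ℂ :=
  (1 / π) * ∫ θ in (0 : ℝ)..π, Complex.cos (n * θ - z * Complex.sin θ)

lemma besselJ_zero_ofReal (x : ℝ) : besselJ 0 x = besselJ0 x := by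
  simp [besselJ, besselJ0, ← intervalIntegral.integral_ofReal]

lemma besselJ_one_ofReal (x : ℝ) : besselJ 1 x = besselJ1 x := by
  simp [besselJ, besselJ1, ← intervalIntegral.integral_ofReal]

lemma besselJ_zero_zero : besselJ 0 0 = 1 := by
  simp [besselJ, pi_ne_zero]

lemma besselJ_neg (n : ℤ) (z : ℂ) : besselJ n (-z) = besselJ (-n) z := by
  simp only [besselJ]
  congr 2 with θ
  rw [← Complex.cos_neg]
  push_cast
  ring_nf

lemma besselJ_neg_order (n : ℤ) (z : ℂ) : besselJ (-n) z = (-1) ^ n * besselJ n z := by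
  have hreflect (θ : ℝ) : Complex.cos (n * (π - θ : ℝ) - z * Complex.sin (π - θ : ℝ)) =
      (-1) ^ n * Complex.cos ((-n : ℤ) * θ - z * Complex.sin θ) := by
    have h := Complex.cos_antiperiodic.int_mul_sub_eq n (x := n * θ + z * Complex.sin θ)
    rw [Int.cast_negOnePow, neg_add'] at h
    push_cast
    rw [Complex.sin_pi_sub, neg_mul, ← h]
    ring_nf
  have hsub := intervalIntegral.integral_comp_sub_left (a := 0) (b := π)
    (fun θ : ℝ ↦ Complex.cos (n * θ - z * Complex.sin θ)) π
  simp only [hreflect, sub_self, sub_zero, intervalIntegral.integral_const_mul] at hsub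
  rw [besselJ, besselJ, ← hsub, mul_left_comm, ← mul_assoc ((-1 : ℂ) ^ n), ← mul_zpow]
  simp

lemma cos_pred_mul_sub (n θ z : ℂ) : Complex.cos ((n - 1) * θ - z) =
    Complex.cos (n * θ - z) * Complex.cos θ + Complex.sin (n * θ - z) * Complex.sin θ := by
  rw [← Complex.cos_sub]
  ring_nf

lemma cos_succ_mul_sub (n θ z : ℂ) : Complex.cos ((n + 1) * θ - z) =
    Complex.cos (n * θ - z) * Complex.cos θ - Complex.sin (n * θ - z) * Complex.sin θ := by
  rw [← Complex.cos_add]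
  ring_nf

lemma hasDerivAt_besselJ (n : ℤ) (z : ℂ) :
    HasDerivAt (besselJ n) ((besselJ (n - 1) z - besselJ (n + 1) z) / 2) z := by
  have h := (hasDerivAt_intervalIntegral_of_continuous
    (f := fun (z : ℂ) (θ : ℝ) ↦ Complex.cos (n * θ - z * Complex.sin θ))
    (f' := fun z θ ↦ Complex.sin (n * θ - z * Complex.sin θ) * Complex.sin θ)
    (fun z ↦ by fun_prop) (by unfold Function.uncurry; fun_prop)
    (fun z θ ↦ by
      simpa using (((hasDerivAt_id z).mul_const (Complex.sin θ)).const_sub (n * θ : ℂ)).ccos)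
    0 π z).const_mul (1 / π : ℂ)
  convert! h using 1
  rw [besselJ, besselJ, ← mul_sub, ← intervalIntegral.integral_sub, mul_div_assoc,
    ← intervalIntegral.integral_div]
  · congr 2 with θ
    push_cast
    rw [cos_pred_mul_sub, cos_succ_mul_sub]
    ring
  all_goals exact Continuous.intervalIntegrable (by fun_prop) _ _

@[fun_prop]
lemma continuous_besselJ (n : ℤ) : Continuous (besselJ n) :=
  continuous_iff_continuousAt.2 fun z ↦ (hasDerivAt_besselJ n z).continuousAt

lemma two_mul_order_mul_besselJ (n : ℤ) (z : ℂ) :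
    2 * n * besselJ n z = z * (besselJ (n - 1) z + besselJ (n + 1) z) := by
  have hderiv (θ : ℝ) : HasDerivAt (fun θ : ℝ ↦ Complex.sin (n * θ - z * Complex.sin θ))
      (n * Complex.cos (n * θ - z * Complex.sin θ) -
        z / 2 * (Complex.cos ((n - 1 : ℤ) * θ - z * Complex.sin θ) +
          Complex.cos ((n + 1 : ℤ) * θ - z * Complex.sin θ))) θ := by
    convert! (((hasDerivAt_id (θ : ℂ)).const_mul (n : ℂ)).fun_sub
      ((Complex.hasDerivAt_sin θ).const_mul z)).csin.comp_ofReal using 1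
    push_cast
    simp only [cos_pred_mul_sub, cos_succ_mul_sub, id_eq]
    ring
  have hint := intervalIntegral.integral_eq_sub_of_hasDerivAt (a := 0) (b := π)
    (fun θ _ ↦ hderiv θ) (Continuous.intervalIntegrable (by fun_prop) _ _)
  rw [intervalIntegral.integral_sub, intervalIntegral.integral_const_mul,
    intervalIntegral.integral_const_mul, intervalIntegral.integral_add] at hint
  · simp only [Complex.ofReal_zero, Complex.sin_pi, Complex.sin_zero, mul_zero, sub_zero,
      Complex.sin_int_mul_pi] at hint
    simp only [besselJ]
    linear_combination (2 / π : ℂ) * hint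
  all_goals exact Continuous.intervalIntegrable (by fun_prop) _ _

lemma besselJ_one_zero : besselJ 1 0 = 0 := by
  simpa using two_mul_order_mul_besselJ 1 0

lemma div_abs_mul_besselJ_one (z : ℂ) (a : ℝ) :
    (a / |a| : ℝ) * besselJ 1 (z * |a|) = besselJ 1 (z * a) := by
  rcases lt_trichotomy a 0 with ha | rfl | ha
  · simp [abs_of_neg ha, ha.ne, besselJ_neg, besselJ_neg_order]
  · simp [besselJ_one_zero]
  · simp [abs_of_pos ha, ha.ne']

lemma besselJ_zero_mul_abs (z : ℂ) (a : ℝ) : besselJ 0 (z * |a|) = besselJ 0 (z * a) := by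
  rcases abs_choice a with h | h <;> simp [h, besselJ_neg]

/-- The integral of the cylindrical wave `exp (w z) J_n(H r)` along the meridian
`(z, r) = (t sin φ, t cos φ)`, `|φ| ≤ π / 2`, of the sphere of radius `t`, with weight `p φ`.
For `n = 0` and `p = cos` it is twice the mean over the sphere. -/
noncomputable def meridianIntegral (w H : ℂ) (n : ℤ) (p : ℝ → ℂ) (t : ℝ) : ℂ :=
  ∫ φ in (-(π / 2))..(π / 2),
    Complex.exp (w * t * Complex.sin φ) * besselJ n (H * t * Complex.cos φ) * p φ

section MeridianIntegral

variable (w H : ℂ) (n : ℤ) {p q : ℝ → ℂ} (t : ℝ)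

lemma meridianIntegral_add (hp : Continuous p) (hq : Continuous q) :
    meridianIntegral w H n (fun φ ↦ p φ + q φ) t =
      meridianIntegral w H n p t + meridianIntegral w H n q t := by
  simp only [meridianIntegral, mul_add]
  exact intervalIntegral.integral_add (Continuous.intervalIntegrable (by fun_prop) _ _)
    (Continuous.intervalIntegrable (by fun_prop) _ _)

lemma meridianIntegral_const_mul (c : ℂ) (p : ℝ → ℂ) :
    meridianIntegral w H n (fun φ ↦ c * p φ) t = c * meridianIntegral w H n p t := by
  simp only [meridianIntegral, mul_left_comm _ c, intervalIntegral.integral_const_mul]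

lemma meridianIntegral_neg_order (p : ℝ → ℂ) :
    meridianIntegral w H (-n) p t = (-1) ^ n * meridianIntegral w H n p t := by
  simp only [meridianIntegral, ← intervalIntegral.integral_const_mul, besselJ_neg_order]
  congr 1 with φ
  ring

lemma two_mul_order_mul_meridianIntegral (hp : Continuous p) :
    2 * n * meridianIntegral w H n p t =
      H * t * (meridianIntegral w H (n - 1) (fun φ ↦ Complex.cos φ * p φ) t +
        meridianIntegral w H (n + 1) (fun φ ↦ Complex.cos φ * p φ) t) := by
  simp only [meridianIntegral]
  rw [← intervalIntegral.integral_add, ← intervalIntegral.integral_const_mul,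
    ← intervalIntegral.integral_const_mul]
  · congr 1 with φ
    linear_combination Complex.exp (w * t * Complex.sin φ) * p φ *
      two_mul_order_mul_besselJ n (H * t * Complex.cos φ)
  all_goals exact Continuous.intervalIntegrable (by fun_prop) _ _

lemma hasDerivAt_meridianIntegral (hp : Continuous p) :
    HasDerivAt (meridianIntegral w H n p)
      (w * meridianIntegral w H n (fun φ ↦ Complex.sin φ * p φ) t +
        H / 2 * (meridianIntegral w H (n - 1) (fun φ ↦ Complex.cos φ * p φ) t -
          meridianIntegral w H (n + 1) (fun φ ↦ Complex.cos φ * p φ) t)) t := by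
  let f' (t φ : ℝ) : ℂ := Complex.exp (w * t * Complex.sin φ) *
    (w * Complex.sin φ * besselJ n (H * t * Complex.cos φ) + H * Complex.cos φ / 2 *
      (besselJ (n - 1) (H * t * Complex.cos φ) - besselJ (n + 1) (H * t * Complex.cos φ))) * p φ
  have hwave (t φ : ℝ) : HasDerivAt (fun s : ℝ ↦ Complex.exp (w * s * Complex.sin φ) *
      besselJ n (H * s * Complex.cos φ) * p φ) (f' t φ) t := by
    have hlin (c d : ℂ) : HasDerivAt (fun s : ℂ ↦ c * s * d) (c * d) t := by
      simpa using ((hasDerivAt_id (t : ℂ)).const_mul c).mul_const d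
    convert! ((hlin w (Complex.sin φ)).cexp.mul
      ((hasDerivAt_besselJ n _).comp (t : ℂ) (hlin H (Complex.cos φ)))).comp_ofReal.mul_const
      (p φ) using 1
    simp only [f', Function.comp_apply]
    ring
  convert! hasDerivAt_intervalIntegral_of_continuous (fun t ↦ by fun_prop)
    (by unfold Function.uncurry; fun_prop) hwave (-(π / 2)) (π / 2) t using 1
  simp only [meridianIntegral, f']
  rw [← intervalIntegral.integral_sub, ← intervalIntegral.integral_const_mul,
    ← intervalIntegral.integral_const_mul, ← intervalIntegral.integral_add]
  · congr 1 with φ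
    ring
  all_goals exact Continuous.intervalIntegrable (by fun_prop) _ _

lemma meridianIntegral_by_parts {p' : ℝ → ℂ} (hp : ∀ φ, HasDerivAt p (p' φ) φ)
    (hp' : Continuous p') :
    w * t * meridianIntegral w H n (fun φ ↦ Complex.cos φ * p φ) t -
        H * t / 2 * (meridianIntegral w H (n - 1) (fun φ ↦ Complex.sin φ * p φ) t -
          meridianIntegral w H (n + 1) (fun φ ↦ Complex.sin φ * p φ) t) +
        meridianIntegral w H n p' t =
      besselJ n 0 * (Complex.exp (w * t) * p (π / 2) - Complex.exp (-(w * t)) * p (-(π / 2))) := by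
  have hpc : Continuous p := continuous_iff_continuousAt.2 fun φ ↦ (hp φ).continuousAt
  have hwave (φ : ℝ) : HasDerivAt (fun φ : ℝ ↦ Complex.exp (w * t * Complex.sin φ) *
      besselJ n (H * t * Complex.cos φ) * p φ)
      (Complex.exp (w * t * Complex.sin φ) *
        ((w * t * Complex.cos φ * besselJ n (H * t * Complex.cos φ) - H * t / 2 * Complex.sin φ *
          (besselJ (n - 1) (H * t * Complex.cos φ) - besselJ (n + 1) (H * t * Complex.cos φ))) *
            p φ + besselJ n (H * t * Complex.cos φ) * p' φ)) φ := by
    convert! (((Complex.hasDerivAt_sin φ).const_mul (w * t)).cexp.mul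
      ((hasDerivAt_besselJ n _).comp (φ : ℂ)
        ((Complex.hasDerivAt_cos φ).const_mul (H * t)))).comp_ofReal.mul (hp φ) using 1
    simp only [Function.comp_apply, Pi.mul_apply]
    ring
  have hint := intervalIntegral.integral_eq_sub_of_hasDerivAt (a := -(π / 2)) (b := π / 2)
    (fun φ _ ↦ hwave φ) (Continuous.intervalIntegrable (by fun_prop) _ _)
  simp only [Complex.ofReal_neg, Complex.ofReal_div, Complex.ofReal_ofNat, Complex.sin_neg,
    Complex.cos_neg, Complex.sin_pi_div_two, Complex.cos_pi_div_two, mul_zero, mul_one,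
    mul_neg] at hint
  refine Eq.trans ?_ (hint.trans (by ring))
  simp only [meridianIntegral]
  rw [← intervalIntegral.integral_sub, ← intervalIntegral.integral_const_mul,
    ← intervalIntegral.integral_const_mul, ← intervalIntegral.integral_sub,
    ← intervalIntegral.integral_add]
  · congr 1 with φ
    ring
  all_goals exact Continuous.intervalIntegrable (by fun_prop) _ _

variable {w H}

lemma meridianIntegral_sinh_identity :
    w * t * meridianIntegral w H 0 (fun φ ↦ Complex.cos φ) t +
      H * t * meridianIntegral w H 1 (fun φ ↦ Complex.sin φ) t = 2 * Complex.sinh (w * t) := by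
  have h := meridianIntegral_by_parts w H 0 t (fun φ ↦ hasDerivAt_const φ (1 : ℂ))
    continuous_const
  have hzero : meridianIntegral w H 0 (fun _ ↦ 0) t = 0 := by simp [meridianIntegral]
  have hneg := meridianIntegral_neg_order w H 1 t (fun φ ↦ Complex.sin φ)
  simp only [besselJ_zero_zero, mul_one, zero_sub, zero_add, zpow_one] at h hneg
  rw [hzero, hneg] at h
  rw [Complex.sinh]
  linear_combination h

lemma meridianIntegral_cosh_identity :
    meridianIntegral w H 0 (fun φ ↦ Complex.cos φ) t +
        w * t * meridianIntegral w H 0 (fun φ ↦ Complex.sin φ * Complex.cos φ) t +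
        H * t * meridianIntegral w H 1 (fun φ ↦ Complex.sin φ * Complex.sin φ) t =
      2 * Complex.cosh (w * t) := by
  have h := meridianIntegral_by_parts w H 0 t
    (fun φ ↦ (Complex.hasDerivAt_sin φ).comp_ofReal) (by fun_prop)
  have hneg := meridianIntegral_neg_order w H 1 t (fun φ ↦ Complex.sin φ * Complex.sin φ)
  simp only [besselJ_zero_zero, zero_sub, zero_add, zpow_one, Complex.ofReal_neg,
    Complex.ofReal_div, Complex.ofReal_ofNat, Complex.sin_neg, Complex.sin_pi_div_two,
    mul_comm (Complex.cos _)] at h hneg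
  rw [hneg] at h
  rw [Complex.cosh]
  linear_combination h

lemma hasDerivAt_half_mul_meridianIntegral :
    HasDerivAt (fun t : ℝ ↦ t / 2 * meridianIntegral w H 0 (fun φ ↦ Complex.cos φ) t)
      (Complex.cosh (w * t) - H * t / 2 * meridianIntegral w H 1 (fun _ ↦ 1) t) t := by
  convert! ((hasDerivAt_id t).ofReal_comp.div_const 2).mul
    (hasDerivAt_meridianIntegral w H 0 t (p := fun φ ↦ Complex.cos φ) (by fun_prop)) using 1
  have hneg := meridianIntegral_neg_order w H 1 t (fun φ ↦ Complex.cos φ * Complex.cos φ)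
  have hone := meridianIntegral_add w H 1 t (p := fun φ ↦ Complex.sin φ * Complex.sin φ)
    (q := fun φ ↦ Complex.cos φ * Complex.cos φ) (by fun_prop) (by fun_prop)
  simp only [← sq, Complex.sin_sq_add_cos_sq, zpow_one] at hone hneg
  have hcosh := meridianIntegral_cosh_identity (w := w) (H := H) t
  simp only [← sq, id_eq, zero_sub, zero_add, Complex.ofReal_one] at hcosh ⊢
  rw [hone, hneg]
  linear_combination -hcosh / 2

lemma hasDerivAt_cosh_sub_mul_meridianIntegral :
    HasDerivAt (fun t : ℝ ↦ Complex.cosh (w * t) -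
        H * t / 2 * meridianIntegral w H 1 (fun _ ↦ 1) t)
      (-(H ^ 2 - w ^ 2) * (t / 2 * meridianIntegral w H 0 (fun φ ↦ Complex.cos φ) t)) t := by
  convert! ((hasDerivAt_id (t : ℂ)).const_mul w).ccosh.comp_ofReal.sub
    ((((hasDerivAt_id t).ofReal_comp.const_mul H).div_const 2).mul
      (hasDerivAt_meridianIntegral w H 1 t (p := fun _ ↦ 1) (by fun_prop))) using 1
  have hrec := two_mul_order_mul_meridianIntegral w H 1 t (p := fun _ ↦ 1) (by fun_prop)
  have hsinh := meridianIntegral_sinh_identity (w := w) (H := H) t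
  simp only [Int.cast_one, mul_one, sub_self, id_eq, Complex.ofReal_one] at hrec ⊢
  linear_combination H / 4 * hrec + w / 2 * hsinh

theorem meridianIntegral_eq_sinDiv_and_cosh_sub_eq_cos {μ : ℂ} (hμ : μ ^ 2 = H ^ 2 - w ^ 2) :
    t / 2 * meridianIntegral w H 0 (fun φ ↦ Complex.cos φ) t = sinDiv μ t ∧
      Complex.cosh (w * t) - H * t / 2 * meridianIntegral w H 1 (fun _ ↦ 1) t =
        Complex.cos (μ * t) := by
  obtain ⟨hsin, hcos⟩ := eq_and_eq_of_hasDerivAt_secondOrder (t₀ := 0)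
    (A := -μ ^ 2 • ContinuousLinearMap.id ℝ ℂ) hasDerivAt_half_mul_meridianIntegral
    (fun t ↦ by simpa [hμ] using hasDerivAt_cosh_sub_mul_meridianIntegral (w := w) (H := H) t)
    (hasDerivAt_sinDiv μ) (fun t ↦ by simpa using hasDerivAt_cos_mul_ofReal μ t)
    (by simp [sinDiv_zero_right]) (by simp)
  exact ⟨congr_fun hsin t, congr_fun hcos t⟩

end MeridianIntegral

lemma integral_eq_integral_cos_smul_comp_sin {E : Type*} [NormedAddCommGroup E] [NormedSpace ℝ E]
    (a : ℝ) (g : ℝ → E) :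
    ∫ q in (-a)..a, g q = ∫ φ in (-(π / 2))..(π / 2), (a * cos φ) • g (a * sin φ) := by
  have hsin := integral_deriv_smul_comp_of_deriv_nonneg (a := -(π / 2)) (b := π / 2)
    (f := sin) (f' := cos) (g := fun s ↦ g (a * s)) (by fun_prop) (fun φ _ ↦ hasDerivAt_sin φ)
    (fun φ hφ ↦ by
      rw [min_eq_left (by linarith [pi_pos]), max_eq_right (by linarith [pi_pos])] at hφ
      exact (cos_pos_of_mem_Ioo hφ).le)
  have hscale := smul_integral_comp_mul_left (a := -1) (b := 1) g a
  simp only [sin_neg, sin_pi_div_two, Function.comp_apply, mul_neg, mul_one] at hsin hscale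
  simp only [← hscale, ← hsin, mul_smul, intervalIntegral.integral_smul]

lemma integral_exp_mul_besselJ (w H : ℂ) (a : ℝ) {g₁ g₀ : ℝ → ℂ} (hg₁ : Continuous g₁)
    (hg₀ : Continuous g₀) :
    ∫ q in (-a)..a, Complex.exp (w * q) *
        (g₁ q / √(a ^ 2 - q ^ 2) * besselJ 1 (H * √(a ^ 2 - q ^ 2)) +
          g₀ q * besselJ 0 (H * √(a ^ 2 - q ^ 2))) =
      meridianIntegral w H 1 (fun φ ↦ g₁ (a * sin φ)) a +
        a * meridianIntegral w H 0 (fun φ ↦ g₀ (a * sin φ) * Complex.cos φ) a := by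
  simp only [integral_eq_integral_cos_smul_comp_sin a, meridianIntegral]
  rw [← intervalIntegral.integral_const_mul, ← intervalIntegral.integral_add]
  · refine intervalIntegral.integral_congr_Ioo_of_le (by linarith [pi_pos]) fun φ hφ ↦ ?_
    have hcos : cos φ ≠ 0 := (cos_pos_of_mem_Ioo hφ).ne'
    have hsqrt : √(a ^ 2 - (a * sin φ) ^ 2) = |a| * cos φ := by
      rw [cos_eq_sqrt_one_sub_sin_sq hφ.1.le hφ.2.le, ← sqrt_sq_eq_abs,
        ← sqrt_mul (sq_nonneg a)]
      ring_nf
    have hdiv : (a * cos φ : ℂ) / (|a| * cos φ) = (a / |a| : ℝ) := by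
      rw [mul_div_mul_right _ _ (by exact_mod_cast hcos), Complex.ofReal_div]
    have hzero := besselJ_zero_mul_abs (H * cos φ) a
    have hone := div_abs_mul_besselJ_one (H * cos φ) a
    simp only [hsqrt, Complex.real_smul, Complex.ofReal_mul, ← Complex.ofReal_cos,
      ← Complex.ofReal_sin, ← mul_assoc, mul_right_comm H _ (cos φ : ℂ), hzero]
    rw [← hone, ← hdiv]
    ring
  all_goals exact Continuous.intervalIntegrable (by fun_prop) _ _

theorem cosh_sub_mul_sinh_add_integral (w H c L : ℂ) (a : ℝ) {μ : ℂ} (hμ : μ ^ 2 = H ^ 2 - w ^ 2) :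
    Complex.cosh (w * a) - c * Complex.sinh (w * a) +
        1 / 2 * ∫ q in (-a)..a, Complex.exp (w * q) *
          (-(H * (a - c * q)) / √(a ^ 2 - q ^ 2) * besselJ 1 (H * √(a ^ 2 - q ^ 2)) +
            (L + c * w) * besselJ 0 (H * √(a ^ 2 - q ^ 2))) =
      Complex.cos (μ * a) + L * sinDiv μ a := by
  have hJ₁ : meridianIntegral w H 1 (fun φ ↦ -(H * (a - c * (a * sin φ : ℝ)))) a =
      -(H * a) * meridianIntegral w H 1 (fun _ ↦ 1) a +
        H * c * a * meridianIntegral w H 1 (fun φ ↦ Complex.sin φ) a := by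
    rw [← meridianIntegral_const_mul, ← meridianIntegral_const_mul,
      ← meridianIntegral_add _ _ _ _ (by fun_prop) (by fun_prop)]
    congr 1 with φ
    push_cast
    ring
  rw [integral_exp_mul_besselJ w H a (g₁ := fun q ↦ -(H * (a - c * q)))
    (g₀ := fun _ ↦ L + c * w) (by fun_prop) (by fun_prop), hJ₁, meridianIntegral_const_mul]
  obtain ⟨hsin, hcos⟩ := meridianIntegral_eq_sinDiv_and_cosh_sub_eq_cos a hμ
  rw [← hsin, ← hcos]
  linear_combination c / 2 * meridianIntegral_sinh_identity (w := w) (H := H) a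

theorem statement14_general (a : ℝ) (h l ω ε η μ : ℂ) (hη : η ^ 2 = 1 + ε ^ 2) (hη₀ : η ≠ 0)
    (hμ : μ ^ 2 = (η * h) ^ 2 - (ω - Complex.I * ε * l) ^ 2) :
    Complex.cosh ((ω - Complex.I * ε * l) * a) -
        Complex.I * ε * Complex.sinh ((ω - Complex.I * ε * l) * a) +
        (1 + ε ^ 2) / 2 * ∫ q in (-a)..a, Complex.exp ((ω - Complex.I * ε * l) * q) *
          (-(h * (a - Complex.I * ε * q) / (η * √(a ^ 2 - q ^ 2))) *
              besselJ 1 (η * h * √(a ^ 2 - q ^ 2)) +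
            l * besselJ 0 (η * h * √(a ^ 2 - q ^ 2))) =
      Complex.cos (μ * a) + (l - Complex.I * ε * ω) * sinDiv μ a := by
  have hcoeff₁ (q : ℝ) : -(η * h * (a - Complex.I * ε * q)) / √(a ^ 2 - q ^ 2) =
      (1 + ε ^ 2) * -(h * (a - Complex.I * ε * q) / (η * √(a ^ 2 - q ^ 2))) := by
    rw [← hη, mul_neg, neg_div, ← mul_div_assoc, sq η, mul_assoc η η, mul_div_mul_left _ _ hη₀,
      mul_assoc]
  have hcoeff₀ : l - Complex.I * ε * ω + Complex.I * ε * (ω - Complex.I * ε * l) =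
      (1 + ε ^ 2) * l := by
    linear_combination -ε ^ 2 * l * Complex.I_sq
  rw [← cosh_sub_mul_sinh_add_integral _ (η * h) (Complex.I * ε) (l - Complex.I * ε * ω) a hμ]
  simp only [hcoeff₁, hcoeff₀, mul_assoc (1 + ε ^ 2), ← mul_add,
    mul_left_comm _ (1 + ε ^ 2), intervalIntegral.integral_const_mul]
  ring

/-- the computational core of the Fourier transform of the
shielded complex source.  With `ω_ε = ω - iεl`, `l_ε = l - iεω`,
`h_ε = √(1+ε²) h`, `ρ₀(q) = √(a²-q²)`, and `μ_ε` any complex square root of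
`h_ε² - ω_ε²`,
`cosh(ω_ε a) - iε sinh(ω_ε a) + ((1+ε²)/2)∫_{-a}^a e^{ω_ε q}
  [-(h(a-iεq)/(√(1+ε²)ρ₀))J₁(h_ε ρ₀) + l J₀(h_ε ρ₀)] dq
  = cos(μ_ε a) + (l_ε/μ_ε) sin(μ_ε a)`
(with `sin(μ_ε a)/μ_ε = a` when `μ_ε = 0`). -/
theorem statement14 (a h l ω ε : ℝ) (ha : 0 < a) (hh : 0 ≤ h) (hε : 0 < ε)
    (με : ℂ)
    (hμ : με ^ 2 =
      ((Real.sqrt (1 + ε ^ 2) * h : ℝ) : ℂ) ^ 2 -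
        ((ω : ℂ) - Complex.I * (ε : ℂ) * (l : ℂ)) ^ 2) :
    Complex.cosh (((ω : ℂ) - Complex.I * (ε : ℂ) * (l : ℂ)) * (a : ℂ)) -
      Complex.I * (ε : ℂ) *
        Complex.sinh (((ω : ℂ) - Complex.I * (ε : ℂ) * (l : ℂ)) * (a : ℂ)) +
      (((1 + ε ^ 2) / 2 : ℝ) : ℂ) *
        ∫ q in (-a)..a,
          Complex.exp (((ω : ℂ) - Complex.I * (ε : ℂ) * (l : ℂ)) * (q : ℂ)) *
            (-((h : ℂ) * ((a : ℂ) - Complex.I * (ε : ℂ) * (q : ℂ)) /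
                ((Real.sqrt (1 + ε ^ 2) : ℂ) * (Real.sqrt (a ^ 2 - q ^ 2) : ℂ))) *
                (besselJ1 (Real.sqrt (1 + ε ^ 2) * h * Real.sqrt (a ^ 2 - q ^ 2)) : ℂ) +
              (l : ℂ) *
                (besselJ0 (Real.sqrt (1 + ε ^ 2) * h * Real.sqrt (a ^ 2 - q ^ 2)) : ℂ)) =
    Complex.cos (με * (a : ℂ)) +
      ((l : ℂ) - Complex.I * (ε : ℂ) * (ω : ℂ)) *
        (if με = 0 then (a : ℂ) else Complex.sin (με * (a : ℂ)) / με) := by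
  have h := statement14_general a h l ω ε √(1 + ε ^ 2) με
    (by exact_mod_cast sq_sqrt (by positivity)) (by exact_mod_cast (sqrt_pos.2 (by positivity)).ne')
    (by simpa using hμ)
  simpa [← besselJ_zero_ofReal, ← besselJ_one_ofReal, sinDiv] using h
end
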